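/- Let b > 0 be real with b² irrational, let x ∈ ℝ, let 0 < δ < min(b,b⁻¹), and let γ_δ be the contour consisting of the real axis with the segment [−δ, δ] replaced by the semicircle of radius δ below the origin. Then the improper contour integral lim_{R,R'→∞} ∫_{γ_δ, −R ≤ Re y ≤ R'} e^{−2πixy}·e^{−πiy²}·e_b(y + c_b) dy exists, is independent of δ, and equals ζ₀⁻¹·e_b(x), where ζ₀ := e^{πi(1−4c_b²)/12}. (Here e_b(y+c_b) is understood via the meromorphic continuation of e_b; its only singularity near γ_δ is the simple pole at y = 0.) -/

import Mathlib

open MeasureTheory Complex Real Filter Topology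

noncomputable section

/-- The special point `c_b = i(b+b⁻¹)/2`. -/
def cb (b : ℝ) : ℂ := Complex.I * ((b : ℂ) + (b : ℂ)⁻¹) / 2

/-- The integrand in the integral representation of the noncompact quantum dilogarithm. -/
def ebIntegrand (b ε : ℝ) (z : ℂ) (t : ℝ) : ℂ :=
  Complex.exp (-2 * Complex.I * z * ((t : ℂ) + Complex.I * (ε : ℂ))) /
    (((t : ℂ) + Complex.I * (ε : ℂ)) *
      Complex.sinh ((b : ℂ) * ((t : ℂ) + Complex.I * (ε : ℂ))) *
      Complex.sinh ((b : ℂ)⁻¹ * ((t : ℂ) + Complex.I * (ε : ℂ))))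

/-- The noncompact quantum dilogarithm defined with contour parameter `ε`. -/
def ebE (b ε : ℝ) (z : ℂ) : ℂ :=
  Complex.exp ((1 / 4 : ℂ) * ∫ t : ℝ, ebIntegrand b ε z t)

/-- The noncompact quantum dilogarithm `e_b` (canonical choice of contour parameter;
the value is independent of this choice). -/
def eb (b : ℝ) (z : ℂ) : ℂ := ebE b (π * min b b⁻¹ / 2) z

/-- The set `{c_b + i(mb + nb⁻¹) : m, n ∈ ℤ≥0}` of poles of the continuation of `e_b`. -/
def ebPoles (b : ℝ) : Set ℂ :=
  {z | ∃ m n : ℕ, z = cb b + Complex.I * ((m : ℂ) * (b : ℂ) + (n : ℂ) * (b : ℂ)⁻¹)}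

/-- The constant `ζ₀ = e^{πi(1−4c_b²)/12}`. -/
def zeta0 (b : ℝ) : ℂ := Complex.exp ((π : ℂ) * Complex.I * (1 - 4 * (cb b) ^ 2) / 12)

/-!
Let `Φ(x)` be the integral over a contour below the pole at `y = 0`; equivalently, `Φ(x)` is the
integral over a line above the pole plus `2πi` times the residue, which is `ζ₀⁻¹`. By the symmetry
`b ↔ b⁻¹` we may assume `b ≤ 1`. Moving the line by `-ib` and using the shift equation of `e_b`
under the integral gives `Φ(x - ib) = (1 + e^{2πb(x - ib/2)}) Φ(x)`, which is the equation
satisfied by `e_b` itself. Hence `Φ / e_b` is holomorphic and `ib`-periodic on a strip of height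
`b`. It grows more slowly than `e^{2π|Re x|/b}`, so all its nonzero Fourier modes vanish and it is
constant; letting `x → -∞` shows that the constant is `ζ₀⁻¹`.

The residue is a multiple of `e_b(i(b⁻¹ - b)/2)`. Its phase comes from the inversion formula for
`e_b(z) e_b(-z)` and its modulus from comparing the two shift equations at the pole.
-/

section Sinh

lemma sinh_ne_zero_of_abs_im_lt_pi {v : ℂ} (hv : v ≠ 0) (him : |v.im| < π) :
    Complex.sinh v ≠ 0 := by
  intro h
  obtain ⟨k, hk⟩ := Complex.sin_eq_zero_iff.mp
    (show Complex.sin (v * I) = 0 by rw [Complex.sin_mul_I, h, zero_mul])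
  have him_eq : -v.im = k * π := by simpa using congrArg Complex.re hk
  have hk0 : k = 0 := by
    rw [← abs_neg, him_eq, abs_mul, abs_of_pos pi_pos] at him
    have : |(k : ℝ)| < 1 := by nlinarith [pi_pos]
    exact Int.abs_lt_one_iff.mp (by exact_mod_cast this)
  exact hv (by simpa [hk0] using hk)

lemma exp_abs_re_div_four_le_norm_sinh {v : ℂ} (hv : 1 ≤ |v.re|) :
    Real.exp |v.re| / 4 ≤ ‖Complex.sinh v‖ := by
  have hdiff : Real.exp |v.re| - Real.exp (-|v.re|) ≤ ‖Complex.exp v - Complex.exp (-v)‖ := by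
    rcases abs_cases v.re with ⟨h, -⟩ | ⟨h, -⟩ <;> rw [h]
    · simpa [Complex.norm_exp] using norm_sub_norm_le (Complex.exp v) (Complex.exp (-v))
    · rw [norm_sub_rev]
      simpa [Complex.norm_exp] using norm_sub_norm_le (Complex.exp (-v)) (Complex.exp v)
  have hsmall : Real.exp (-|v.re|) ≤ Real.exp |v.re| / 2 := by
    have h2 : 2 ≤ Real.exp |v.re| := by linarith [Real.add_one_le_exp |v.re|]
    have h1 : Real.exp (-|v.re|) ≤ 1 := Real.exp_le_one_iff.mpr (by linarith)
    linarith
  rw [Complex.sinh, norm_div, Complex.norm_two]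
  linarith

lemma exists_mul_exp_abs_re_le_norm_sinh {r θ : ℝ} (hr : 0 < r) (hθ : θ < π) :
    ∃ c > 0, ∀ v : ℂ, r ≤ ‖v‖ → |v.im| ≤ θ → c * Real.exp |v.re| ≤ ‖Complex.sinh v‖ := by
  have hK : IsCompact {v : ℂ | r ≤ ‖v‖ ∧ |v.im| ≤ θ ∧ |v.re| ≤ 1} := by
    refine Metric.isCompact_of_isClosed_isBounded ?_ ?_
    · exact (isClosed_le continuous_const continuous_norm).inter
        ((isClosed_le (continuous_abs.comp Complex.continuous_im) continuous_const).inter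
          (isClosed_le (continuous_abs.comp Complex.continuous_re) continuous_const))
    · refine isBounded_iff_forall_norm_le.mpr ⟨1 + θ, fun v hv => ?_⟩
      exact (Complex.norm_le_abs_re_add_abs_im v).trans (add_le_add hv.2.2 hv.2.1)
  obtain ⟨c, hc, hmin⟩ := hK.exists_forall_le' (f := fun v => ‖Complex.sinh v‖) (a := 0)
    (by fun_prop) fun v hv => norm_pos_iff.mpr
      (sinh_ne_zero_of_abs_im_lt_pi (norm_pos_iff.mp (hr.trans_le hv.1)) (hv.2.1.trans_lt hθ))
  refine ⟨min (1 / 4) (c / Real.exp 1), by positivity, fun v hv him => ?_⟩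
  rcases le_total 1 |v.re| with hre | hre
  · calc min (1 / 4) (c / Real.exp 1) * Real.exp |v.re| ≤ 1 / 4 * Real.exp |v.re| := by
          gcongr; exact min_le_left _ _
      _ = Real.exp |v.re| / 4 := by ring
      _ ≤ _ := exp_abs_re_div_four_le_norm_sinh hre
  · calc min (1 / 4) (c / Real.exp 1) * Real.exp |v.re| ≤ c / Real.exp 1 * Real.exp 1 := by
          gcongr; exact min_le_right _ _
      _ = c := div_mul_cancel₀ _ (Real.exp_pos 1).ne'
      _ ≤ _ := hmin v ⟨hv, him, hre⟩

end Sinh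

section Contours

variable {E : Type*} [NormedAddCommGroup E]

lemma integrable_exp_neg_mul_abs {α : ℝ} (hα : 0 < α) :
    Integrable fun t : ℝ => Real.exp (-(α * |t|)) := by
  rw [← integrableOn_univ, ← Set.Iic_union_Ioi (a := (0 : ℝ))]
  refine .union ((integrableOn_exp_mul_Iic hα 0).congr_fun (fun t ht => ?_) measurableSet_Iic)
    ((exp_neg_integrableOn_Ioi 0 hα).congr_fun (fun t ht => ?_) measurableSet_Ioi)
  · simp [abs_of_nonpos (Set.mem_Iic.mp ht)]
  · simp [abs_of_pos (Set.mem_Ioi.mp ht)]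

lemma integrable_of_norm_le_exp_neg_mul_abs {φ : ℝ → E} {C α : ℝ} (hα : 0 < α)
    (hφ : Continuous φ) (hbound : ∀ t, ‖φ t‖ ≤ C * Real.exp (-(α * |t|))) : Integrable φ :=
  ((integrable_exp_neg_mul_abs hα).const_mul C).mono' hφ.aestronglyMeasurable (.of_forall hbound)

lemma tendsto_exp_neg_mul_abs_cocompact {α : ℝ} (hα : 0 < α) :
    Tendsto (fun t : ℝ => Real.exp (-(α * |t|))) (cocompact ℝ) (𝓝 0) :=
  Real.tendsto_exp_neg_atTop_nhds_zero.comp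
    ((tendsto_norm_cocompact_atTop (E := ℝ)).const_mul_atTop hα)

lemma tendsto_integral_vertical_cocompact [NormedSpace ℝ E] {h : ℂ → E} {y₀ y₁ C α r : ℝ}
    (hy : y₀ ≤ y₁) (hα : 0 < α)
    (hbound : ∀ y : ℂ, y₀ ≤ y.im → y.im ≤ y₁ → r ≤ ‖y‖ → ‖h y‖ ≤ C * Real.exp (-(α * |y.re|))) :
    Tendsto (fun x : ℝ => ∫ v in y₀..y₁, h (x + v * I)) (cocompact ℝ) (𝓝 0) := by
  have hlim := ((tendsto_exp_neg_mul_abs_cocompact hα).const_mul C).mul_const |y₁ - y₀|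
  rw [mul_zero, zero_mul] at hlim
  refine squeeze_zero_norm' ?_ hlim
  filter_upwards [(tendsto_norm_cocompact_atTop (E := ℝ)).eventually_ge_atTop r] with x hx
  refine intervalIntegral.norm_integral_le_of_norm_le_const fun v hv => ?_
  rw [Set.uIoc_of_le hy] at hv
  have hr : r ≤ ‖(x + v * I : ℂ)‖ := hx.trans <| by
    simpa using Complex.abs_re_le_norm (x + v * I)
  simpa using hbound (x + v * I) (by simpa using hv.1.le) (by simpa using hv.2) hr

/-- `HasResidueOn h U c` says that `0` is the only singularity of `h` in `U` and that its residue
there is `c`, encoded by the requirement that `h y - c / y` have a primitive on all of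
`U \ {0}`. -/
structure HasResidueOn (h : ℂ → ℂ) (U : Set ℂ) (c : ℂ) : Prop where
  continuousOn : ContinuousOn h (U \ {0})
  exists_primitive : ∃ G : ℂ → ℂ, ∀ y ∈ U, y ≠ 0 → HasDerivAt G (h y - c / y) y

/-- The integral of `h` from `s` to `t` along the real axis with `[-δ, δ]` replaced by the
semicircle of radius `δ` below the origin. -/
def indentedIntegral (h : ℂ → ℂ) (δ s t : ℝ) : ℂ :=
  (∫ u in s..(-δ), h u) +
    (∫ θ in (π : ℝ)..(2 * π), I * δ * Complex.exp (I * θ) * h (δ * Complex.exp (I * θ))) +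
    ∫ u in δ..t, h u

namespace HasResidueOn

variable {h : ℂ → ℂ} {U : Set ℂ} {c : ℂ}

lemma of_laurent {ψ : ℂ → ℂ} {a₂ a₃ : ℂ} (hU : IsOpen U) (hUc : Convex ℝ U)
    (hψ : DifferentiableOn ℂ ψ U)
    (hh : ∀ y ∈ U, y ≠ 0 → h y = a₃ / y ^ 3 + a₂ / y ^ 2 + c / y + ψ y) :
    HasResidueOn h U c := by
  constructor
  · have hcont : ContinuousOn (fun y => a₃ / y ^ 3 + a₂ / y ^ 2 + c / y + ψ y) (U \ {0}) := by
      have hψ' := hψ.continuousOn.mono (Set.sdiff_subset (t := {0}))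
      fun_prop (disch := simp +contextual)
    exact hcont.congr fun y hy => hh y hy.1 hy.2
  · obtain ⟨Ψ, hΨ⟩ := hUc.exists_forall_hasDerivWithinAt hψ
    refine ⟨fun y => -a₃ / 2 * (y⁻¹) ^ 2 - a₂ * y⁻¹ + Ψ y, fun y hy hy0 => ?_⟩
    refine ((((hasDerivAt_inv hy0).fun_pow 2).const_mul (-a₃ / 2)).fun_sub
      ((hasDerivAt_inv hy0).const_mul a₂)).fun_add
        ((hΨ y hy).hasDerivAt (hU.mem_nhds hy)) |>.congr_deriv ?_
    rw [hh y hy hy0]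
    norm_num
    field_simp
    ring

lemma of_tendsto (hU : IsOpen U) (hUc : Convex ℝ U)
    (h0 : 0 ∈ U) (hd : DifferentiableOn ℂ h (U \ {0}))
    (hlim : Tendsto (fun y => y * h y) (𝓝[≠] 0) (𝓝 c)) : HasResidueOn h U c := by
  set F := Function.update (fun y => y * h y) 0 c with hF
  have hFeq : ∀ y ≠ 0, F y = y * h y := fun y hy => Function.update_of_ne hy _ _
  have hFd : DifferentiableOn ℂ F U := by
    refine (Complex.differentiableOn_compl_singleton_and_continuousAt_iff (hU.mem_nhds h0)).mp
      ⟨(differentiableOn_id.mul hd).congr fun y hy => hFeq y hy.2, ?_⟩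
    exact continuousAt_update_same.mpr hlim
  refine of_laurent (a₂ := 0) (a₃ := 0) hU hUc
    ((Complex.differentiableOn_dslope (hU.mem_nhds h0)).mpr hFd) fun y _ hy => ?_
  rw [dslope_of_ne _ hy, slope_def_field, hFeq y hy, hF, Function.update_self]
  field_simp
  ring

/-- The two primitives are `G y + c * log (± I * y)`, one per choice of branch cut along the
imaginary axis. -/
lemma exists_branches (hh : HasResidueOn h U c) :
    ∃ Hl Hu : ℂ → ℂ, (∀ y ∈ U, y.im < 0 ∨ y.re ≠ 0 → HasDerivAt Hl (h y) y) ∧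
      (∀ y ∈ U, 0 < y.im ∨ y.re ≠ 0 → HasDerivAt Hu (h y) y) ∧
      (∀ y, 0 < y.re → Hl y - Hu y = π * I * c) ∧ (∀ y, y.re < 0 → Hl y - Hu y = -(π * I * c)) := by
  obtain ⟨G, hG⟩ := hh.exists_primitive
  have hlog {w y : ℂ} (hy : y ∈ U) (hy0 : y ≠ 0) (hw : w ≠ 0) (hs : w * y ∈ slitPlane) :
      HasDerivAt (fun y => G y + c * Complex.log (w * y)) (h y) y := by
    refine (hG y hy hy0).fun_add ((((hasDerivAt_id' y).const_mul w).clog hs).const_mul c)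
      |>.congr_deriv ?_
    field_simp
    ring
  refine ⟨fun y => G y + c * Complex.log (I * y), fun y => G y + c * Complex.log (-I * y),
    fun y hy hs => hlog hy ?_ I_ne_zero ?_, fun y hy hs => hlog hy ?_ (by simp) ?_,
    fun y hy => ?_, fun y hy => ?_⟩
  · rintro rfl; simp at hs
  · simpa [mem_slitPlane_iff] using hs
  · rintro rfl; simp at hs
  · simpa [mem_slitPlane_iff] using hs
  · have harg : arg (-(-I * y)) = arg (-I * y) + π := arg_neg_eq_arg_add_pi_of_im_neg (by simpa)
    simp only [neg_mul, neg_neg] at harg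
    simp only [Complex.log, neg_mul, norm_neg, harg]
    push_cast
    ring
  · have harg : arg (-(-I * y)) = arg (-I * y) - π := arg_neg_eq_arg_sub_pi_of_im_pos (by simpa)
    simp only [neg_mul, neg_neg] at harg
    simp only [Complex.log, neg_mul, norm_neg, harg]
    push_cast
    ring

lemma integral_path (hh : HasResidueOn h U c) {H : ℂ → ℂ} {γ γ' : ℝ → ℂ} {a b : ℝ}
    (hU : ∀ t ∈ Set.uIcc a b, γ t ∈ U) (h0 : ∀ t ∈ Set.uIcc a b, γ t ≠ 0)
    (hH : ∀ t ∈ Set.uIcc a b, HasDerivAt H (h (γ t)) (γ t))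
    (hγ : ∀ t, HasDerivAt γ (γ' t) t) (hγ' : Continuous γ') :
    ∫ t in a..b, γ' t * h (γ t) = H (γ b) - H (γ a) :=
  intervalIntegral.integral_eq_sub_of_hasDerivAt (fun t ht => (hH t ht).scomp t (hγ t))
    (hγ'.continuousOn.mul (hh.continuousOn.comp (fun t _ => (hγ t).continuousAt.continuousWithinAt)
      fun t ht => ⟨hU t ht, h0 t ht⟩)).intervalIntegrable

lemma integral_horizontal (hh : HasResidueOn h U c) {H : ℂ → ℂ} {y₀ s t : ℝ}
    (hU : ∀ u ∈ Set.uIcc s t, (u + y₀ * I : ℂ) ∈ U)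
    (h0 : ∀ u ∈ Set.uIcc s t, (u + y₀ * I : ℂ) ≠ 0)
    (hH : ∀ u ∈ Set.uIcc s t, HasDerivAt H (h (u + y₀ * I)) (u + y₀ * I)) :
    ∫ u in s..t, h (u + y₀ * I) = H (t + y₀ * I) - H (s + y₀ * I) := by
  simpa only [one_mul] using hh.integral_path (γ := fun u => u + y₀ * I) (γ' := fun _ => 1) hU h0 hH
    (fun u => ofRealCLM.hasDerivAt.add_const _) continuous_const

lemma integral_vertical (hh : HasResidueOn h U c) {H : ℂ → ℂ} {x y₀ y₁ : ℝ} (hx : x ≠ 0)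
    (hU : ∀ v ∈ Set.uIcc y₀ y₁, (x + v * I : ℂ) ∈ U)
    (hH : ∀ v ∈ Set.uIcc y₀ y₁, HasDerivAt H (h (x + v * I)) (x + v * I)) :
    I * ∫ v in y₀..y₁, h (x + v * I) = H (x + y₁ * I) - H (x + y₀ * I) := by
  rw [← intervalIntegral.integral_const_mul]
  refine hh.integral_path (γ := fun v => x + v * I) (γ' := fun _ => I) hU
    (fun v _ hv => hx (by simpa using congrArg Complex.re hv)) hH (fun v => ?_) continuous_const
  simpa using (ofRealCLM.hasDerivAt.mul_const I).const_add (x : ℂ)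

lemma integral_upper (hh : HasResidueOn h U c) {Hu : ℂ → ℂ}
    (hHu : ∀ y ∈ U, 0 < y.im ∨ y.re ≠ 0 → HasDerivAt Hu (h y) y) {s t y₀ y₁ : ℝ}
    (hs : s < 0) (ht : 0 < t) (hy₀ : y₀ ≤ 0) (hy₁ : 0 < y₁)
    (hU : ∀ y : ℂ, y₀ ≤ y.im → y.im ≤ y₁ → y ∈ U) :
    (∫ u in s..t, h (u + y₁ * I)) - (I * ∫ v in y₀..y₁, h (t + v * I))
      + (I * ∫ v in y₀..y₁, h (s + v * I)) = Hu (t + y₀ * I) - Hu (s + y₀ * I) := by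
  have hside {x : ℝ} (hx : x ≠ 0) :
      I * ∫ v in y₀..y₁, h (x + v * I) = Hu (x + y₁ * I) - Hu (x + y₀ * I) := by
    have hmem : ∀ v ∈ Set.uIcc y₀ y₁, (x + v * I : ℂ) ∈ U := fun v hv => by
      rw [Set.uIcc_of_le (hy₀.trans hy₁.le)] at hv
      exact hU _ (by simpa using hv.1) (by simpa using hv.2)
    exact hh.integral_vertical hx hmem fun v hv => hHu _ (hmem v hv) (.inr (by simpa))
  have hmem (u : ℝ) : (u + y₁ * I : ℂ) ∈ U := hU _ (by simpa using hy₀.trans hy₁.le) (by simp)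
  rw [hside hs.ne, hside ht.ne', hh.integral_horizontal (fun u _ => hmem u)
    (fun u _ hu => hy₁.ne' (by simpa using congrArg Complex.im hu))
    fun u _ => hHu _ (hmem u) (.inl (by simpa))]
  ring

theorem integral_rectangle (hh : HasResidueOn h U c) {s t y₀ y₁ : ℝ}
    (hs : s < 0) (ht : 0 < t) (hy₀ : y₀ < 0) (hy₁ : 0 < y₁)
    (hU : ∀ y : ℂ, y₀ ≤ y.im → y.im ≤ y₁ → y ∈ U) :
    (∫ u in s..t, h (u + y₀ * I)) - (∫ u in s..t, h (u + y₁ * I))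
      + (I * ∫ v in y₀..y₁, h (t + v * I)) - (I * ∫ v in y₀..y₁, h (s + v * I))
      = 2 * π * I * c := by
  obtain ⟨Hl, Hu, hHl, hHu, hpos, hneg⟩ := hh.exists_branches
  have hmem (u : ℝ) : (u + y₀ * I : ℂ) ∈ U := hU _ (by simp) (by simpa using (hy₀.trans hy₁).le)
  have hlower := hh.integral_horizontal (s := s) (t := t) (fun u _ => hmem u)
    (fun u _ hu => hy₀.ne (by simpa using congrArg Complex.im hu))
    fun u _ => hHl _ (hmem u) (.inl (by simpa))
  linear_combination hlower - hh.integral_upper hHu hs ht hy₀.le hy₁ hU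
    + hpos (t + y₀ * I) (by simpa) - hneg (s + y₀ * I) (by simpa)

lemma integral_semicircle (hh : HasResidueOn h U c) {Hl : ℂ → ℂ}
    (hHl : ∀ y ∈ U, y.im < 0 ∨ y.re ≠ 0 → HasDerivAt Hl (h y) y) {δ : ℝ} (hδ : 0 < δ)
    (hU : ∀ y : ℂ, y.im ≤ 0 → y ∈ U) :
    ∫ θ in (π : ℝ)..(2 * π), I * δ * Complex.exp (I * θ) * h (δ * Complex.exp (I * θ))
      = Hl δ - Hl (-δ : ℝ) := by
  have him (θ : ℝ) : (δ * Complex.exp (I * θ)).im = δ * Real.sin θ := by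
    simp [mul_comm I, Complex.exp_ofReal_mul_I_im]
  have hre (θ : ℝ) : (δ * Complex.exp (I * θ)).re = δ * Real.cos θ := by
    simp [mul_comm I, Complex.exp_ofReal_mul_I_re]
  have hsin {θ : ℝ} (hθ : θ ∈ Set.uIcc π (2 * π)) : Real.sin θ ≤ 0 := by
    rw [Set.uIcc_of_le (by linarith [pi_pos])] at hθ
    rw [← Real.sin_sub_two_pi]
    exact Real.sin_nonpos_of_nonpos_of_neg_pi_le (by linarith [hθ.2]) (by linarith [hθ.1])
  have hmem {θ : ℝ} (hθ : θ ∈ Set.uIcc π (2 * π)) : (δ * Complex.exp (I * θ) : ℂ) ∈ U :=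
    hU _ (by rw [him]; exact mul_nonpos_of_nonneg_of_nonpos hδ.le (hsin hθ))
  rw [hh.integral_path (H := Hl) (γ := fun θ => δ * Complex.exp (I * θ)) (fun θ hθ => hmem hθ)
    (fun θ _ => by simp [hδ.ne']) (fun θ hθ => hHl _ (hmem hθ) ?_) (fun θ => ?_) (by fun_prop)]
  · push_cast
    rw [mul_comm I, mul_comm I, Complex.exp_two_pi_mul_I, Complex.exp_pi_mul_I, mul_one,
      mul_neg_one]
  · rw [him, hre]
    refine (hsin hθ).lt_or_eq.imp (mul_neg_of_pos_of_neg hδ) fun h0 =>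
      mul_ne_zero hδ.ne' fun h1 => ?_
    simpa [h0, h1] using Real.sin_sq_add_cos_sq θ
  · refine (((hasDerivAt_id' (θ : ℂ)).comp_ofReal.const_mul I).cexp.const_mul (δ : ℂ))
      |>.congr_deriv ?_
    ring

lemma indentedIntegral_eq (hh : HasResidueOn h U c) {Hl : ℂ → ℂ}
    (hHl : ∀ y ∈ U, y.im < 0 ∨ y.re ≠ 0 → HasDerivAt Hl (h y) y) {δ s t : ℝ}
    (hδ : 0 < δ) (hs : s < 0) (ht : 0 < t) (hU : ∀ y : ℂ, y.im ≤ 0 → y ∈ U) :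
    indentedIntegral h δ s t = Hl t - Hl s := by
  have hreal {p q : ℝ} (hpq : ∀ u ∈ Set.uIcc p q, u ≠ 0) :
      ∫ u in p..q, h u = Hl q - Hl p := by
    simpa using hh.integral_horizontal (y₀ := 0) (fun u _ => hU _ (by simp))
      (fun u hu h0 => hpq u hu (by simpa using h0))
      fun u hu => hHl _ (hU _ (by simp)) (.inr (by simpa using hpq u hu))
  have hleft : ∀ u ∈ Set.uIcc s (-δ), u ≠ 0 := fun u hu =>
    (hu.2.trans_lt (sup_lt_iff.mpr ⟨hs, neg_neg_of_pos hδ⟩)).ne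
  have hright : ∀ u ∈ Set.uIcc δ t, u ≠ 0 := fun u hu =>
    ((lt_inf_iff.mpr ⟨hδ, ht⟩).trans_le hu.1).ne'
  rw [indentedIntegral, hreal hleft, hh.integral_semicircle hHl hδ hU, hreal hright]
  ring

theorem indentedIntegral_sub_integral (hh : HasResidueOn h U c) {δ s t y₁ : ℝ}
    (hδ : 0 < δ) (hs : s < 0) (ht : 0 < t) (hy₁ : 0 < y₁) (hU : ∀ y : ℂ, y.im ≤ y₁ → y ∈ U) :
    indentedIntegral h δ s t - (∫ u in s..t, h (u + y₁ * I))
      + (I * ∫ v in (0 : ℝ)..y₁, h (t + v * I)) - (I * ∫ v in (0 : ℝ)..y₁, h (s + v * I))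
      = 2 * π * I * c := by
  obtain ⟨Hl, Hu, hHl, hHu, hpos, hneg⟩ := hh.exists_branches
  have hlower := hh.indentedIntegral_eq hHl hδ hs ht fun y hy => hU y (hy.trans hy₁.le)
  have hupper := hh.integral_upper hHu hs ht le_rfl hy₁ fun y _ => hU y
  simp only [ofReal_zero, zero_mul, add_zero] at hupper
  linear_combination hlower - hupper + hpos t (by simpa) - hneg s (by simpa)

lemma continuous_horizontal (hh : HasResidueOn h U c) {y₀ : ℝ} (hy₀ : y₀ ≠ 0)
    (hU : ∀ y : ℂ, y.im = y₀ → y ∈ U) : Continuous fun u : ℝ => h (u + y₀ * I) :=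
  hh.continuousOn.comp_continuous (by fun_prop) fun u =>
    ⟨hU _ (by simp), fun hu => hy₀ (by simpa using congrArg Complex.im hu)⟩

theorem integral_sub_integral (hh : HasResidueOn h U c) {y₀ y₁ C α : ℝ}
    (hy₀ : y₀ < 0) (hy₁ : 0 < y₁) (hU : ∀ y : ℂ, y₀ ≤ y.im → y.im ≤ y₁ → y ∈ U) (hα : 0 < α)
    (hbound : ∀ y : ℂ, y₀ ≤ y.im → y.im ≤ y₁ → min (-y₀) y₁ ≤ ‖y‖ →
      ‖h y‖ ≤ C * Real.exp (-(α * |y.re|))) :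
    (∫ u : ℝ, h (u + y₀ * I)) - (∫ u : ℝ, h (u + y₁ * I)) = 2 * π * I * c := by
  have hline {v : ℝ} (hv₀ : y₀ ≤ v) (hv₁ : v ≤ y₁) (hv : min (-y₀) y₁ ≤ |v|) :
      Tendsto (fun T : ℝ => ∫ u in (-T)..T, h (u + v * I)) atTop (𝓝 (∫ u : ℝ, h (u + v * I))) := by
    refine intervalIntegral_tendsto_integral (integrable_of_norm_le_exp_neg_mul_abs (C := C) hα
      (hh.continuous_horizontal ?_ ?_) fun u => ?_) tendsto_neg_atTop_atBot tendsto_id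
    · rintro rfl
      exact hv.not_gt (by simp [hy₀, hy₁])
    · rintro y rfl
      exact hU y hv₀ hv₁
    · simpa using hbound (u + v * I) (by simpa) (by simpa)
        (hv.trans (by simpa using Complex.abs_im_le_norm (u + v * I)))
  have hside := (tendsto_integral_vertical_cocompact (hy₀.trans hy₁).le hα hbound).const_mul I
  have hright := hside.comp (tendsto_id.mono_right atTop_le_cocompact)
  have hleft := hside.comp (tendsto_neg_atTop_atBot.mono_right atBot_le_cocompact)
  have hlim := (((hline le_rfl (hy₀.trans hy₁).le (by simp [abs_of_neg hy₀])).sub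
    (hline (hy₀.trans hy₁).le le_rfl (by simp [abs_of_pos hy₁]))).add hright).sub hleft
  rw [mul_zero, add_zero, sub_zero] at hlim
  refine tendsto_nhds_unique hlim (tendsto_const_nhds.congr' ?_)
  filter_upwards [eventually_gt_atTop 0] with T hT
  exact (hh.integral_rectangle (neg_neg_of_pos hT) hT hy₀ hy₁ hU).symm

end HasResidueOn

end Contours

section LaurentExpansion

lemma exists_exp_eq_sum_add_pow_mul (n : ℕ) :
    ∃ ρ : ℂ → ℂ, Differentiable ℂ ρ ∧
      ∀ z, Complex.exp z = ∑ i ∈ Finset.range n, z ^ i / i.factorial + z ^ n * ρ z := by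
  obtain ⟨ρ, hρ, h⟩ := AnalyticAt.exists_eq_sum_add_pow_mul (f := Complex.exp) (by fun_prop) n
  replace h : ∀ z, Complex.exp z = ∑ i ∈ Finset.range n, z ^ i / i.factorial + z ^ n * ρ z := by
    simpa [iteratedDeriv_eq_iterate] using h
  refine ⟨ρ, fun z => ?_, h⟩
  rcases eq_or_ne z 0 with rfl | hz
  · exact hρ.differentiableAt
  · have heq : ρ =ᶠ[𝓝 z] fun z =>
        (Complex.exp z - ∑ i ∈ Finset.range n, z ^ i / i.factorial) / z ^ n := by
      filter_upwards [isOpen_ne.mem_nhds hz] with w hw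
      rw [h w, add_sub_cancel_left, mul_div_cancel_left₀ _ (pow_ne_zero n hw)]
    refine DifferentiableAt.congr_of_eventuallyEq ?_ heq
    fun_prop (disch := exact pow_ne_zero n hz)

lemma exists_exp_mul_eq (a : ℂ) :
    ∃ ρ : ℂ → ℂ, Differentiable ℂ ρ ∧
      ∀ z, Complex.exp (a * z) = 1 + a * z + a ^ 2 / 2 * z ^ 2 + z ^ 3 * ρ z := by
  obtain ⟨ρ, hρ, h⟩ := exists_exp_eq_sum_add_pow_mul 3
  refine ⟨fun z => a ^ 3 * ρ (a * z), by fun_prop, fun z => ?_⟩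
  rw [h]
  simp [Finset.sum_range_succ]
  ring

lemma exists_sinh_eq :
    ∃ τ : ℂ → ℂ, Differentiable ℂ τ ∧
      ∀ z, Complex.sinh z = z * (1 + z ^ 2 / 6 + z ^ 3 * τ z) := by
  obtain ⟨ρ, hρ, h⟩ := exists_exp_eq_sum_add_pow_mul 4
  refine ⟨fun z => (ρ z - ρ (-z)) / 2, by fun_prop, fun z => ?_⟩
  rw [Complex.sinh, h, h]
  simp [Finset.sum_range_succ, Nat.factorial]
  ring

lemma exists_sinh_mul_sinh_eq {b : ℝ} (hb : b ≠ 0) :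
    ∃ σ : ℂ → ℂ, Differentiable ℂ σ ∧ ∀ u, Complex.sinh (b * u) * Complex.sinh ((b : ℂ)⁻¹ * u) =
      u ^ 2 * (1 + ((b : ℂ) ^ 2 + ((b : ℂ) ^ 2)⁻¹) / 6 * u ^ 2 + u ^ 3 * σ u) := by
  obtain ⟨τ, hτ, h⟩ := exists_sinh_eq
  have hb' : (b : ℂ) ≠ 0 := ofReal_ne_zero.mpr hb
  refine ⟨fun u => b ^ 3 * τ (b * u) + ((b : ℂ) ^ 3)⁻¹ * τ ((b : ℂ)⁻¹ * u) + u / 36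
      + u ^ 2 / 6 * (((b : ℂ))⁻¹ * τ ((b : ℂ)⁻¹ * u) + b * τ (b * u))
      + u ^ 3 * τ (b * u) * τ ((b : ℂ)⁻¹ * u), by fun_prop, fun u => ?_⟩
  rw [h, h]
  field_simp
  ring

end LaurentExpansion

section LogDilogarithm

/-- The integrand `e^{-2izu} / (u sinh(bu) sinh(b⁻¹u))` of the integral representation of
`log e_b(z)`, as a meromorphic function of `u`. -/
def dilogKernel (b : ℝ) (z u : ℂ) : ℂ :=
  Complex.exp (-2 * I * z * u) / (u * Complex.sinh (b * u) * Complex.sinh ((b : ℂ)⁻¹ * u))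

/-- The height of the line of integration chosen in the definition of `eb`: half the distance from
the origin to the nearest other pole of `dilogKernel`. -/
def dilogHeight (b : ℝ) : ℝ := π * min b b⁻¹ / 2

/-- The holomorphic logarithm of `e_b` given by the integral representation. -/
def logEb (b : ℝ) (z : ℂ) : ℂ := 1 / 4 * ∫ t : ℝ, dilogKernel b z (t + dilogHeight b * I)

variable {b : ℝ}

lemma eb_eq_exp_logEb (z : ℂ) : eb b z = Complex.exp (logEb b z) := by
  simp only [eb, ebE, ebIntegrand, logEb, dilogKernel, dilogHeight, mul_comm I]

lemma dilogKernel_neg_neg (z u : ℂ) : dilogKernel b (-z) (-u) = -dilogKernel b z u := by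
  simp only [dilogKernel, mul_neg, neg_mul, neg_neg, Complex.sinh_neg, div_neg]

lemma dilogHeight_pos (hb : 0 < b) : 0 < dilogHeight b := by
  have := inv_pos.mpr hb
  rw [dilogHeight]
  positivity

lemma mul_two_dilogHeight_le (hb : 0 < b) : b * (2 * dilogHeight b) ≤ π := by
  calc b * (2 * dilogHeight b) = π * (b * min b b⁻¹) := by rw [dilogHeight]; ring
    _ ≤ π * (b * b⁻¹) := by gcongr; exact min_le_right _ _
    _ = π := by rw [mul_inv_cancel₀ hb.ne', mul_one]

lemma inv_mul_two_dilogHeight_le (hb : 0 < b) : b⁻¹ * (2 * dilogHeight b) ≤ π := by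
  simpa [dilogHeight, min_comm] using mul_two_dilogHeight_le (inv_pos.mpr hb)

lemma sinh_mul_ne_zero {a M : ℝ} {u : ℂ} (ha : 0 < a) (haM : a * M ≤ π) (hu : u ≠ 0)
    (him : |u.im| < M) : Complex.sinh (a * u) ≠ 0 := by
  refine sinh_ne_zero_of_abs_im_lt_pi (mul_ne_zero (ofReal_ne_zero.mpr ha.ne') hu) ?_
  rw [im_ofReal_mul, abs_mul, abs_of_pos ha]
  exact (mul_lt_mul_of_pos_left him ha).trans_le haM

theorem hasResidueOn_dilogKernel (hb : 0 < b) (z : ℂ) :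
    HasResidueOn (dilogKernel b z) {u | |u.im| < 2 * dilogHeight b}
      (-2 * z ^ 2 - ((b : ℂ) ^ 2 + ((b : ℂ) ^ 2)⁻¹) / 6) := by
  obtain ⟨ρ, hρ, hexp⟩ := exists_exp_mul_eq (-2 * I * z)
  obtain ⟨σ, hσ, hsinh⟩ := exists_sinh_mul_sinh_eq hb.ne'
  set s : ℂ := ((b : ℂ) ^ 2 + ((b : ℂ) ^ 2)⁻¹) / 6
  set r : ℂ := -2 * z ^ 2 - s with hr
  have hS : ∀ u : ℂ, |u.im| < 2 * dilogHeight b → 1 + s * u ^ 2 + u ^ 3 * σ u ≠ 0 := by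
    intro u hu hS
    rcases eq_or_ne u 0 with rfl | hu0
    · simp at hS
    · refine mul_ne_zero (sinh_mul_ne_zero hb (mul_two_dilogHeight_le hb) hu0 hu)
        (sinh_mul_ne_zero (inv_pos.mpr hb) (inv_mul_two_dilogHeight_le hb) hu0 hu) ?_
      rw [ofReal_inv, hsinh, hS, mul_zero]
  refine .of_laurent (a₃ := 1) (a₂ := -2 * I * z)
    (ψ := fun u => (ρ u - σ u * (1 + -2 * I * z * u + r * u ^ 2) - s * (-2 * I * z) - s * r * u) /
      (1 + s * u ^ 2 + u ^ 3 * σ u))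
    (isOpen_lt (continuous_abs.comp Complex.continuous_im) continuous_const) ?_
    (DifferentiableOn.div (by fun_prop) (by fun_prop) hS) fun u hu hu0 => ?_
  · have : {u : ℂ | |u.im| < 2 * dilogHeight b} =
        Complex.imLm ⁻¹' Set.Ioo (-(2 * dilogHeight b)) (2 * dilogHeight b) := by
      ext u
      simp [abs_lt]
    rw [this]
    exact (convex_Ioo _ _).linear_preimage _
  · have hSu := hS u hu
    rw [dilogKernel, hexp, mul_assoc u, hsinh]
    generalize hS_def : 1 + s * u ^ 2 + u ^ 3 * σ u = S at hSu ⊢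
    field_simp
    rw [← hS_def, hr]
    ring_nf
    simp only [I_sq]
    ring

lemma exists_norm_dilogKernel_le (hb : 0 < b) :
    ∃ C > 0, ∀ z u : ℂ, dilogHeight b ≤ ‖u‖ → |u.im| ≤ dilogHeight b → ‖dilogKernel b z u‖ ≤
      C * Real.exp (2 * (z.im * u.re + z.re * u.im) - (b + b⁻¹) * |u.re|) := by
  have hε := dilogHeight_pos hb
  have hsinh {a : ℝ} (ha : 0 < a) (haε : a * (2 * dilogHeight b) ≤ π) : ∃ c > 0, ∀ u : ℂ,
      dilogHeight b ≤ ‖u‖ → |u.im| ≤ dilogHeight b →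
        c * Real.exp (a * |u.re|) ≤ ‖Complex.sinh (a * u)‖ := by
    obtain ⟨c, hc, hbound⟩ := exists_mul_exp_abs_re_le_norm_sinh (mul_pos ha hε)
      (half_lt_self pi_pos)
    refine ⟨c, hc, fun u hu him => ?_⟩
    have := hbound (a * u) (by simpa [abs_of_pos ha] using mul_le_mul_of_nonneg_left hu ha.le)
      (by rw [im_ofReal_mul, abs_mul, abs_of_pos ha]; nlinarith)
    simpa [abs_mul, abs_of_pos ha] using this
  obtain ⟨c₁, hc₁, h₁⟩ := hsinh hb (mul_two_dilogHeight_le hb)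
  obtain ⟨c₂, hc₂, h₂⟩ := hsinh (inv_pos.mpr hb) (inv_mul_two_dilogHeight_le hb)
  refine ⟨(dilogHeight b * c₁ * c₂)⁻¹, by positivity, fun z u hu him => ?_⟩
  have hnum : ‖Complex.exp (-2 * I * z * u)‖ = Real.exp (2 * (z.im * u.re + z.re * u.im)) := by
    rw [Complex.norm_exp]
    congr 1
    simp
    ring
  have hden : dilogHeight b * (c₁ * Real.exp (b * |u.re|)) * (c₂ * Real.exp (b⁻¹ * |u.re|)) ≤
      ‖u * Complex.sinh (b * u) * Complex.sinh ((b : ℂ)⁻¹ * u)‖ := by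
    rw [norm_mul, norm_mul]
    gcongr
    · exact h₁ u hu him
    · exact ofReal_inv b ▸ h₂ u hu him
  rw [dilogKernel, norm_div, hnum]
  refine (div_le_div_of_nonneg_left (Real.exp_pos _).le (by positivity) hden).trans_eq ?_
  rw [Real.exp_sub, add_mul, Real.exp_add]
  field_simp

lemma exists_norm_logEb_le (hb : 0 < b) {V : ℝ} (hV : V < (b + b⁻¹) / 2) :
    ∃ C, ∀ z : ℂ, |z.im| ≤ V → ‖logEb b z‖ ≤ C * Real.exp (2 * dilogHeight b * z.re) := by
  obtain ⟨C, hC, hbound⟩ := exists_norm_dilogKernel_le hb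
  have hε := dilogHeight_pos hb
  have hα : 0 < b + b⁻¹ - 2 * V := by linarith
  refine ⟨1 / 4 * (C * ∫ t : ℝ, Real.exp (-((b + b⁻¹ - 2 * V) * |t|))), fun z hz => ?_⟩
  have hline : ∀ t : ℝ, ‖dilogKernel b z (t + dilogHeight b * I)‖ ≤
      C * Real.exp (2 * dilogHeight b * z.re) * Real.exp (-((b + b⁻¹ - 2 * V) * |t|)) := by
    intro t
    have hnorm : dilogHeight b ≤ ‖(t + dilogHeight b * I : ℂ)‖ := by
      simpa [abs_of_pos hε] using Complex.abs_im_le_norm (t + dilogHeight b * I)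
    refine (hbound z _ hnorm (by simp [abs_of_pos hε])).trans ?_
    rw [mul_assoc C, ← Real.exp_add]
    have hzt : z.im * t ≤ V * |t| := (le_abs_self _).trans (by rw [abs_mul]; gcongr)
    gcongr
    simp
    linarith
  rw [logEb, norm_mul]
  calc ‖(1 / 4 : ℂ)‖ * ‖∫ t : ℝ, dilogKernel b z (t + dilogHeight b * I)‖
      ≤ 1 / 4 * (C * Real.exp (2 * dilogHeight b * z.re) *
          ∫ t : ℝ, Real.exp (-((b + b⁻¹ - 2 * V) * |t|))) := by
        rw [← integral_const_mul]
        refine mul_le_mul (by norm_num) ?_ (norm_nonneg _) (by norm_num)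
        exact norm_integral_le_of_norm_le ((integrable_exp_neg_mul_abs hα).const_mul _)
          (.of_forall hline)
    _ = _ := by ring

theorem logEb_add_logEb_neg (hb : 0 < b) {z : ℂ} (hz : |z.im| < (b + b⁻¹) / 2) :
    logEb b z + logEb b (-z) =
      I * π * z ^ 2 + I * π * ((b : ℂ) ^ 2 + ((b : ℂ) ^ 2)⁻¹) / 12 := by
  obtain ⟨C, hC, hbound⟩ := exists_norm_dilogKernel_le hb
  have hε := dilogHeight_pos hb
  have hresidue := (hasResidueOn_dilogKernel hb z).integral_sub_integral (y₀ := -dilogHeight b)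
    (y₁ := dilogHeight b) (C := C * Real.exp (2 * |z.re| * dilogHeight b))
    (α := b + b⁻¹ - 2 * |z.im|) (by linarith) hε
    (fun u h₁ h₂ => (abs_le.mpr ⟨h₁, h₂⟩).trans_lt (by linarith)) (by linarith)
    fun u h₁ h₂ hu => by
      have him : |u.im| ≤ dilogHeight b := abs_le.mpr ⟨h₁, h₂⟩
      refine (hbound z u (by simpa using hu) him).trans ?_
      rw [mul_assoc C, ← Real.exp_add]
      have hre : z.im * u.re ≤ |z.im| * |u.re| := (le_abs_self _).trans (abs_mul _ _).le
      have him' : z.re * u.im ≤ |z.re| * dilogHeight b :=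
        (le_abs_self _).trans (by rw [abs_mul]; gcongr)
      gcongr
      linarith
  have hlower : ∫ t : ℝ, dilogKernel b z (t + (-dilogHeight b : ℝ) * I) =
      -∫ t : ℝ, dilogKernel b (-z) (t + dilogHeight b * I) := by
    rw [← integral_neg_eq_self, ← integral_neg]
    refine integral_congr_ae (.of_forall fun t => ?_)
    simp only [← dilogKernel_neg_neg (-z), neg_neg]
    congr 1
    push_cast
    ring
  rw [hlower] at hresidue
  simp only [logEb]
  linear_combination -hresidue / 4

end LogDilogarithm

section Growth

variable {b : ℝ}

/-- The logarithm is bounded on the left half of the strip; the inversion formula transports this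
to the right half. -/
lemma exists_abs_re_logEb_add_le (hb : 0 < b) {V : ℝ} (hV : V < (b + b⁻¹) / 2) :
    ∃ C, ∀ z : ℂ, |z.im| ≤ V → |(logEb b z).re + 2 * π * (max z.re 0 * z.im)| ≤ C := by
  obtain ⟨C, hC⟩ := exists_norm_logEb_le hb hV
  have hneg {z : ℂ} (hz : |z.im| ≤ V) (hre : z.re ≤ 0) : |(logEb b z).re| ≤ |C| :=
    (Complex.abs_re_le_norm _).trans <| (hC z hz).trans <| (le_abs_self _).trans <| by
      rw [abs_mul, Real.abs_exp]
      exact mul_le_of_le_one_right (abs_nonneg C) (Real.exp_le_one_iff.mpr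
        (mul_nonpos_of_nonneg_of_nonpos (by linarith [dilogHeight_pos hb]) hre))
  refine ⟨|C|, fun z hz => ?_⟩
  rcases le_total z.re 0 with hre | hre
  · simpa [max_eq_right hre] using hneg hz hre
  · have hinv : (logEb b z).re + (logEb b (-z)).re = -(2 * π * (z.re * z.im)) := by
      rw [← Complex.add_re, logEb_add_logEb_neg hb (hz.trans_lt hV)]
      norm_cast
      simp [sq]
      ring
    rw [max_eq_left hre, ← abs_neg]
    convert hneg (z := -z) (by simpa) (by simpa) using 2
    linear_combination -hinv

lemma exists_norm_eb_le (hb : 0 < b) {V : ℝ} (hV : V < (b + b⁻¹) / 2) :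
    ∃ C > 0, ∀ z : ℂ, |z.im| ≤ V →
      ‖eb b z‖ ≤ C * Real.exp (-(2 * π * (max z.re 0 * z.im))) ∧
      ‖(eb b z)⁻¹‖ ≤ C * Real.exp (2 * π * (max z.re 0 * z.im)) := by
  obtain ⟨C, hC⟩ := exists_abs_re_logEb_add_le hb hV
  refine ⟨Real.exp C, Real.exp_pos C, fun z hz => ?_⟩
  have := abs_le.mp (hC z hz)
  rw [eb_eq_exp_logEb, ← Complex.exp_neg, Complex.norm_exp, Complex.norm_exp, Complex.neg_re,
    ← Real.exp_add, ← Real.exp_add, Real.exp_le_exp, Real.exp_le_exp]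
  constructor <;> linarith

lemma tendsto_eb_atBot (hb : 0 < b) {v : ℝ} (hv : |v| < (b + b⁻¹) / 2) :
    Tendsto (fun ξ : ℝ => eb b (ξ + v * I)) atBot (𝓝 1) := by
  obtain ⟨C, hC⟩ := exists_norm_logEb_le hb hv
  have hexp : Tendsto (fun ξ : ℝ => C * Real.exp (2 * dilogHeight b * ξ)) atBot (𝓝 0) := by
    simpa using (Real.tendsto_exp_atBot.comp (tendsto_id.const_mul_atBot
      (mul_pos two_pos (dilogHeight_pos hb)))).const_mul C
  have hlog : Tendsto (fun ξ : ℝ => logEb b (ξ + v * I)) atBot (𝓝 0) :=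
    squeeze_zero_norm (fun ξ => by simpa using hC (ξ + v * I) (by simp)) hexp
  simpa [eb_eq_exp_logEb, Function.comp_def] using (Complex.continuous_exp.tendsto 0).comp hlog

lemma conj_logEb_I_mul (w : ℝ) :
    (starRingEnd ℂ) (logEb b (I * w)) = -logEb b (-(I * w)) := by
  have hkernel (u : ℂ) : (starRingEnd ℂ) (dilogKernel b (I * w) u) =
      dilogKernel b (I * w) ((starRingEnd ℂ) u) := by
    simp only [dilogKernel, map_div₀, map_mul, ← Complex.exp_conj, ← Complex.sinh_conj, map_neg,
      map_inv₀, conj_ofReal, conj_I, map_ofNat, neg_mul, mul_neg]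
    ring_nf
  rw [logEb, logEb, map_mul, ← integral_conj, ← mul_neg, ← integral_neg, ← integral_neg_eq_self]
  congr 2
  · simp [Complex.conj_ofNat]
  · funext t
    rw [hkernel, ← dilogKernel_neg_neg, neg_neg]
    congr 1
    simp only [map_add, map_mul, map_neg, conj_ofReal, conj_I, ofReal_neg]
    ring

lemma sq_norm_eb_I_mul (w : ℝ) :
    ((‖eb b (I * w)‖ : ℂ)) ^ 2 = eb b (I * w) / eb b (-(I * w)) := by
  rw [← Complex.mul_conj', eb_eq_exp_logEb, eb_eq_exp_logEb, ← Complex.exp_conj,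
    conj_logEb_I_mul, ← Complex.exp_add, ← Complex.exp_sub, sub_eq_add_neg]

lemma eb_I_mul (hb : 0 < b) {w : ℝ} (hw : |w| < (b + b⁻¹) / 2) :
    eb b (I * w) = ‖eb b (I * w)‖ *
      Complex.exp (I * π / 2 * (((b : ℂ) ^ 2 + ((b : ℂ) ^ 2)⁻¹) / 12 - w ^ 2)) := by
  have hinv := logEb_add_logEb_neg hb (z := I * w) (by simpa)
  have hconj : logEb b (I * w) - logEb b (-(I * w)) = 2 * ((logEb b (I * w)).re : ℂ) := by
    rw [sub_eq_add_neg, ← conj_logEb_I_mul, Complex.add_conj]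
    push_cast
    ring
  rw [eb_eq_exp_logEb, Complex.norm_exp, ofReal_exp, ← Complex.exp_add]
  congr 1
  rw [mul_pow, I_sq] at hinv
  linear_combination hinv / 2 + hconj / 2

end Growth

section Continuation

/-- `f` is the meromorphic continuation of the noncompact quantum dilogarithm `e_b`. -/
structure IsDilogContinuation (b : ℝ) (f : ℂ → ℂ) : Prop where
  pos : 0 < b
  eq_eb : ∀ z : ℂ, |z.im| < (b + b⁻¹) / 2 → f z = eb b z
  analyticAt : ∀ z : ℂ, z ∉ ebPoles b → AnalyticAt ℂ f z
  shift : ∀ z : ℂ, z - I * (b : ℂ) / 2 ∉ ebPoles b → z + I * (b : ℂ) / 2 ∉ ebPoles b →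
    f (z - I * (b : ℂ) / 2) =
      (1 + Complex.exp (2 * (π : ℂ) * (b : ℂ) * z)) * f (z + I * (b : ℂ) / 2)
  shift_inv : ∀ z : ℂ, z - I * (b : ℂ)⁻¹ / 2 ∉ ebPoles b → z + I * (b : ℂ)⁻¹ / 2 ∉ ebPoles b →
    f (z - I * (b : ℂ)⁻¹ / 2) =
      (1 + Complex.exp (2 * (π : ℂ) * (b : ℂ)⁻¹ * z)) * f (z + I * (b : ℂ)⁻¹ / 2)

lemma cb_inv (b : ℝ) : cb b⁻¹ = cb b := by
  simp [cb, add_comm]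

lemma zeta0_inv (b : ℝ) : zeta0 b⁻¹ = zeta0 b := by
  rw [zeta0, cb_inv, zeta0]

lemma eb_inv (b : ℝ) (z : ℂ) : eb b⁻¹ z = eb b z := by
  simp only [eb, ebE, ebIntegrand, ofReal_inv, inv_inv, min_comm, mul_right_comm]

lemma ebPoles_inv (b : ℝ) : ebPoles b⁻¹ = ebPoles b := by
  ext z
  simp only [ebPoles, cb_inv, Set.mem_ofPred_eq, ofReal_inv, inv_inv]
  rw [exists_comm]
  simp only [add_comm]

lemma cb_im (b : ℝ) : (cb b).im = (b + b⁻¹) / 2 := by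
  rw [cb, mul_div_assoc, ← ofReal_inv]
  norm_cast
  simp

lemma notMem_ebPoles_of_im_lt {b : ℝ} (hb : 0 < b) {z : ℂ} (hz : z.im < (b + b⁻¹) / 2) :
    z ∉ ebPoles b := by
  rintro ⟨m, n, rfl⟩
  have hb' := inv_pos.mpr hb
  have hmn : (0 : ℝ) ≤ m * b + n * b⁻¹ := by positivity
  rw [← ofReal_inv, Complex.add_im, cb_im] at hz
  norm_cast at hz
  simp at hz
  linarith

lemma hasDerivAt_one_sub_exp (a : ℂ) : HasDerivAt (fun y => 1 - Complex.exp (a * y)) (-a) 0 := by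
  simpa using (((hasDerivAt_id' (0 : ℂ)).const_mul a).cexp).const_sub 1

lemma tendsto_one_sub_exp_div (a : ℂ) :
    Tendsto (fun y => (1 - Complex.exp (a * y)) / y) (𝓝[≠] 0) (𝓝 (-a)) :=
  (hasDerivAt_one_sub_exp a).tendsto_slope.congr fun y => by simp [slope_def_field]

namespace IsDilogContinuation

variable {b : ℝ} {f : ℂ → ℂ}

lemma inv (hf : IsDilogContinuation b f) : IsDilogContinuation b⁻¹ f where
  pos := inv_pos.mpr hf.pos
  eq_eb z hz := by
    rw [eb_inv]
    exact hf.eq_eb z (by simpa [add_comm] using hz)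
  analyticAt := ebPoles_inv b ▸ hf.analyticAt
  shift := by simpa [ebPoles_inv] using hf.shift_inv
  shift_inv := by simpa [ebPoles_inv] using hf.shift

lemma sub_I_mul (hf : IsDilogContinuation b f) {z : ℂ} (hz : z - I * b ∉ ebPoles b)
    (hz' : z ∉ ebPoles b) :
    f (z - I * b) = (1 + Complex.exp (2 * π * b * (z - I * b / 2))) * f z := by
  have h := hf.shift (z - I * b / 2)
  rw [sub_sub, add_halves, sub_add_cancel] at h
  exact h hz hz'

lemma sub_I_mul_of_im_lt (hf : IsDilogContinuation b f) {z : ℂ} (hz : z.im < (b + b⁻¹) / 2) :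
    f (z - I * b) = (1 + Complex.exp (2 * π * b * (z - I * b / 2))) * f z := by
  have hb := hf.pos
  exact hf.sub_I_mul (notMem_ebPoles_of_im_lt hb (by simp; linarith))
    (notMem_ebPoles_of_im_lt hb hz)

lemma one_sub_exp_mul_eq (hf : IsDilogContinuation b f) {y : ℂ} (hy : y.im < b⁻¹) :
    f (y - cb b) = (1 - Complex.exp (2 * π * b * y)) * f (y - I * ((b⁻¹ - b) / 2 : ℝ)) := by
  have hb : (b : ℂ) ≠ 0 := ofReal_ne_zero.mpr hf.pos.ne'
  have hexp : Complex.exp (2 * π * b * (y - I * ((b⁻¹ - b) / 2 : ℝ) - I * b / 2)) =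
      -Complex.exp (2 * π * b * y) := by
    rw [← neg_one_mul, ← Complex.exp_neg_pi_mul_I, ← Complex.exp_add]
    congr 1
    push_cast
    field_simp
    ring
  have h := hf.sub_I_mul_of_im_lt (z := y - I * ((b⁻¹ - b) / 2 : ℝ)) (by simp; linarith)
  rw [hexp, ← sub_eq_add_neg] at h
  rw [← h, cb]
  congr 1
  push_cast
  ring

lemma analyticAt_of_im_lt (hf : IsDilogContinuation b f) {z : ℂ} (hz : z.im < (b + b⁻¹) / 2) :
    AnalyticAt ℂ f z :=
  hf.analyticAt z (notMem_ebPoles_of_im_lt hf.pos hz)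

lemma hasDerivAt_one_sub_exp_mul (hf : IsDilogContinuation b f) (a : ℂ) {p : ℂ}
    (hp : p.im < (b + b⁻¹) / 2) :
    HasDerivAt (fun y : ℝ => (1 - Complex.exp (a * y)) * f (y + p)) (-a * f p) 0 := by
  have hf' : DifferentiableAt ℂ (fun y => f (y + p)) 0 := by
    have := (hf.analyticAt_of_im_lt hp).differentiableAt
    exact DifferentiableAt.comp (g := f) 0 (by simpa) (by fun_prop)
  simpa using ((hasDerivAt_one_sub_exp a).mul hf'.hasDerivAt).comp_ofReal (z := 0)

/-- Both sides of the two shift equations at `y - c_b` vanish at `y = 0`; compare derivatives. -/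
lemma eq_sq_mul (hf : IsDilogContinuation b f) :
    f (I * ((b⁻¹ - b) / 2 : ℝ)) = b ^ 2 * f (-(I * ((b⁻¹ - b) / 2 : ℝ))) := by
  have hb := hf.pos
  have hb' := inv_pos.mpr hb
  have hfun : (fun y : ℝ => (1 - Complex.exp (2 * π * b * y)) *
      f (y + -(I * ((b⁻¹ - b) / 2 : ℝ)))) = fun y : ℝ =>
      (1 - Complex.exp (2 * π * (b⁻¹ : ℝ) * y)) * f (y + I * ((b⁻¹ - b) / 2 : ℝ)) := by
    funext y
    rw [← sub_eq_add_neg, ← hf.one_sub_exp_mul_eq (by simpa), ← cb_inv,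
      hf.inv.one_sub_exp_mul_eq (by simpa)]
    congr 2
    rw [inv_inv]
    push_cast
    ring
  have h₁ := hf.hasDerivAt_one_sub_exp_mul (2 * π * b) (p := -(I * ((b⁻¹ - b) / 2 : ℝ)))
    (by simp; linarith)
  have h₂ := hf.hasDerivAt_one_sub_exp_mul (2 * π * (b⁻¹ : ℝ)) (p := I * ((b⁻¹ - b) / 2 : ℝ))
    (by simp; linarith)
  rw [hfun] at h₁
  have h := h₁.unique h₂
  have hb0 : (b : ℂ) ≠ 0 := ofReal_ne_zero.mpr hb.ne'
  have hπ : (π : ℂ) ≠ 0 := ofReal_ne_zero.mpr pi_ne_zero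
  rw [ofReal_inv] at h
  generalize f (I * ((b⁻¹ - b) / 2 : ℝ)) = p, f (-(I * ((b⁻¹ - b) / 2 : ℝ))) = q at h ⊢
  field_simp at h
  exact (neg_injective h).symm

theorem apply_I_mul (hf : IsDilogContinuation b f) :
    f (I * ((b⁻¹ - b) / 2 : ℝ)) = I * b * (zeta0 b)⁻¹ := by
  have hb := hf.pos
  have hb' := inv_pos.mpr hb
  have hw : |(b⁻¹ - b) / 2| < (b + b⁻¹) / 2 := by rw [abs_lt]; constructor <;> linarith
  set w : ℝ := (b⁻¹ - b) / 2 with hw_def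
  have hratio : eb b (I * w) = b ^ 2 * eb b (-(I * w)) := by
    rw [← hf.eq_eb _ (by simpa), ← hf.eq_eb _ (by simpa), hf.eq_sq_mul]
  have hnorm : ‖eb b (I * w)‖ = b := by
    have hsq := sq_norm_eb_I_mul (b := b) w
    rw [hratio, mul_div_cancel_right₀ _ (by simp [eb_eq_exp_logEb]), ← hratio] at hsq
    exact (sq_eq_sq₀ (norm_nonneg _) hb.le).mp (by exact_mod_cast hsq)
  have hb0 : (b : ℂ) ≠ 0 := ofReal_ne_zero.mpr hb.ne'
  rw [hf.eq_eb _ (by simpa), eb_I_mul hb hw, hnorm, zeta0, ← Complex.exp_neg, mul_comm I (b : ℂ),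
    mul_assoc]
  nth_rw 2 [← Complex.exp_pi_div_two_mul_I]
  rw [← Complex.exp_add, hw_def, cb]
  congr 2
  push_cast
  rw [div_pow, div_pow, mul_pow, I_sq]
  field_simp
  ring

end IsDilogContinuation

end Continuation

section FourierKernel

/-- The integrand `e^{-2πixy} e^{-πiy²} f(y + c_b)` of the Fourier transform. -/
def fourierKernel (b : ℝ) (f : ℂ → ℂ) (x y : ℂ) : ℂ :=
  Complex.exp (-2 * π * I * x * y) * Complex.exp (-π * I * y ^ 2) * f (y + cb b)

variable {b : ℝ} {f : ℂ → ℂ}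

lemma fourierKernel_inv (b : ℝ) (f : ℂ → ℂ) : fourierKernel b⁻¹ f = fourierKernel b f := by
  funext x y
  rw [fourierKernel, fourierKernel, cb_inv]

lemma add_cb_notMem_ebPoles (hb : 0 < b) (hb1 : b ≤ 1) {y : ℂ} (hy0 : y ≠ 0) (hy : y.im < b) :
    y + cb b ∉ ebPoles b := by
  rintro ⟨m, n, h⟩
  have hy' : y = I * (m * b + n * b⁻¹ : ℝ) := by
    push_cast
    linear_combination h
  have hb' : b ≤ b⁻¹ := hb1.trans ((one_le_inv₀ hb).mpr hb1)
  have him : (m + n : ℝ) * b ≤ y.im := by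
    rw [hy']
    simp only [mul_im, I_re, I_im, ofReal_re, ofReal_im]
    nlinarith [mul_le_mul_of_nonneg_left hb' n.cast_nonneg]
  have hmn : m + n = 0 := by
    by_contra hmn
    have : (1 : ℝ) ≤ m + n := by exact_mod_cast Nat.one_le_iff_ne_zero.mpr hmn
    nlinarith
  obtain ⟨rfl, rfl⟩ := Nat.add_eq_zero_iff.mp hmn
  exact hy0 (by simpa using hy')

lemma one_sub_exp_two_mul (u : ℂ) :
    1 - Complex.exp (2 * u) = -2 * Complex.exp u * Complex.sinh u := by
  rw [Complex.sinh, Complex.exp_neg, two_mul, Complex.exp_add]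
  have := Complex.exp_ne_zero u
  field_simp
  ring

lemma exists_mul_exp_max_re_le_norm_one_sub_exp {a r β : ℝ} (ha : 0 < a) (hr : 0 < r)
    (hβ : a * β < π) : ∃ c > 0, ∀ y : ℂ, r ≤ ‖y‖ → |y.im| ≤ β →
      c * Real.exp (2 * a * max y.re 0) ≤ ‖1 - Complex.exp (2 * (a * y))‖ := by
  obtain ⟨c, hc, hsinh⟩ := exists_mul_exp_abs_re_le_norm_sinh (mul_pos ha hr) hβ
  refine ⟨2 * c, by positivity, fun y hy hyβ => ?_⟩
  have hle := hsinh (a * y)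
    (by rw [norm_mul, norm_real, Real.norm_of_nonneg ha.le]; gcongr)
    (by rw [im_ofReal_mul, abs_mul, abs_of_pos ha]; gcongr)
  rw [re_ofReal_mul, abs_mul, abs_of_pos ha] at hle
  have hexp : Real.exp (2 * a * max y.re 0) = Real.exp (a * y.re) * Real.exp (a * |y.re|) := by
    rw [← Real.exp_add, ← max_zero_add_max_neg_zero_eq_abs_self]
    congr 1
    grind
  rw [one_sub_exp_two_mul, norm_mul, norm_mul, norm_neg, Complex.norm_ofNat, Complex.norm_exp,
    re_ofReal_mul, hexp, mul_mul_mul_comm]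
  gcongr

lemma norm_exp_mul_norm_exp (x y : ℂ) :
    ‖Complex.exp (-2 * π * I * x * y) * Complex.exp (-π * I * y ^ 2)‖ =
      Real.exp (2 * π * (x.re * y.im + x.im * y.re + y.re * y.im)) := by
  rw [← Complex.exp_add, Complex.norm_exp]
  congr 1
  simp [pow_two]
  ring

namespace IsDilogContinuation

lemma one_sub_exp_mul_apply_add_cb (hf : IsDilogContinuation b f) (hb1 : b ≤ 1) {y : ℂ}
    (hy0 : y ≠ 0) (hy : y.im < b) :
    (1 - Complex.exp (2 * π * b * y)) * f (y + cb b) = f (y + I * ((b⁻¹ - b) / 2 : ℝ)) := by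
  have hb0 : (b : ℂ) ≠ 0 := ofReal_ne_zero.mpr hf.pos.ne'
  have hexp : Complex.exp (2 * π * b * (y + cb b - I * b / 2)) = -Complex.exp (2 * π * b * y) := by
    rw [← neg_one_mul, ← Complex.exp_pi_mul_I, ← Complex.exp_add, cb]
    congr 1
    field_simp
    ring
  have h := hf.sub_I_mul (z := y + cb b)
    (notMem_ebPoles_of_im_lt hf.pos (by simpa [cb_im] using by linarith))
    (add_cb_notMem_ebPoles hf.pos hb1 hy0 hy)
  rw [hexp, ← sub_eq_add_neg] at h
  rw [← h, cb]
  congr 1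
  push_cast
  ring

lemma differentiableAt_fourierKernel (hf : IsDilogContinuation b f) (hb1 : b ≤ 1) (x : ℂ) {y : ℂ}
    (hy0 : y ≠ 0) (hy : y.im < b) : DifferentiableAt ℂ (fourierKernel b f x) y := by
  have hd := (hf.analyticAt _ (add_cb_notMem_ebPoles hf.pos hb1 hy0 hy)).differentiableAt
  exact .mul (by fun_prop) (hd.comp y (by fun_prop))

/-- The residue of `f (y + c_b)` at `0` is `-f (i (b⁻¹ - b) / 2) / (2πb)`. -/
lemma hasResidueOn_fourierKernel (hf : IsDilogContinuation b f) (hb1 : b ≤ 1) (x : ℂ) :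
    HasResidueOn (fourierKernel b f x) {y | y.im < b} ((zeta0 b)⁻¹ / (2 * π * I)) := by
  have hb := hf.pos
  have hU : IsOpen {y : ℂ | y.im < b} := isOpen_lt continuous_im continuous_const
  have h0 : (0 : ℂ) ∈ {y : ℂ | y.im < b} := by simpa
  refine .of_tendsto hU (convex_halfSpace_im_lt b) h0
    (fun y hy => (hf.differentiableAt_fourierKernel hb1 x hy.2 hy.1).differentiableWithinAt) ?_
  have hslope := tendsto_one_sub_exp_div (2 * π * b)
  have hcont : ContinuousAt (fun y : ℂ => Complex.exp (-2 * π * I * x * y) *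
      Complex.exp (-π * I * y ^ 2) * f (y + I * ((b⁻¹ - b) / 2 : ℝ))) 0 := by
    have hf₀ : ContinuousAt f (0 + I * ((b⁻¹ - b) / 2 : ℝ)) :=
      (hf.analyticAt_of_im_lt (by simp; linarith)).continuousAt
    exact .mul (by fun_prop) (ContinuousAt.comp (g := f) hf₀ (by fun_prop))
  have hb0 : (b : ℂ) ≠ 0 := ofReal_ne_zero.mpr hb.ne'
  have hπ : (π : ℂ) ≠ 0 := ofReal_ne_zero.mpr pi_ne_zero
  have hne : (-(2 * π * b) : ℂ) ≠ 0 := by simp [hb0, hπ]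
  have hlim := (hcont.tendsto.mono_left nhdsWithin_le_nhds).div hslope hne
  have hval : I * b * (zeta0 b)⁻¹ / -(2 * π * b) = (zeta0 b)⁻¹ / (2 * π * I) := by
    field_simp
    rw [I_sq]
    ring
  simp only [mul_zero, zero_add, zero_pow two_ne_zero, Complex.exp_zero, one_mul, hf.apply_I_mul,
    hval] at hlim
  refine hlim.congr' ?_
  filter_upwards [self_mem_nhdsWithin, mem_nhdsWithin_of_mem_nhds (hU.mem_nhds h0),
    hslope.eventually_ne hne] with y hy0 hy hy1
  rw [Pi.div_apply, ← hf.one_sub_exp_mul_apply_add_cb hb1 hy0 hy, fourierKernel]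
  have h₁ : y ≠ 0 := hy0
  have h₂ := (div_ne_zero_iff.mp hy1).1
  generalize 1 - Complex.exp (2 * π * b * y) = e at h₂ ⊢
  field_simp

lemma exists_norm_apply_add_cb_le (hf : IsDilogContinuation b f) (hb1 : b ≤ 1) {r β : ℝ}
    (hr : 0 < r) (hβ : β < b) : ∃ C > 0, ∀ y : ℂ, r ≤ ‖y‖ → |y.im| ≤ β →
      ‖f (y + cb b)‖ ≤ C * Real.exp (-(2 * π * (max y.re 0 * (y.im + (b + b⁻¹) / 2)))) := by
  have hb := hf.pos
  have hbb : b ≤ b⁻¹ := hb1.trans ((one_le_inv₀ hb).mpr hb1)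
  obtain ⟨C, hC, hV⟩ := exists_norm_eb_le hb (V := β + (b⁻¹ - b) / 2) (by linarith)
  have hbβ : b * β < 1 := by nlinarith
  obtain ⟨c, hc, hden⟩ := exists_mul_exp_max_re_le_norm_one_sub_exp (mul_pos pi_pos hb) hr
    (by simpa only [mul_assoc] using mul_lt_of_lt_one_right pi_pos hbβ)
  refine ⟨C / c, by positivity, fun y hy hyβ => ?_⟩
  have hy0 : y ≠ 0 := norm_pos_iff.mp (hr.trans_le hy)
  have him := abs_le.mp hyβ
  have hw : |(y + I * ((b⁻¹ - b) / 2 : ℝ)).im| ≤ β + (b⁻¹ - b) / 2 := by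
    simp only [Complex.add_im, I_mul_im, ofReal_re]
    rw [abs_le]
    constructor <;> linarith
  have hnum := (hV _ hw).1
  rw [← hf.eq_eb _ (hw.trans_lt (by linarith)), ← hf.one_sub_exp_mul_apply_add_cb hb1 hy0
    (by linarith), norm_mul] at hnum
  simp only [add_re, add_im, I_mul_re, I_mul_im, ofReal_re, ofReal_im, neg_zero, add_zero] at hnum
  have hle := hden y hy hyβ
  rw [ofReal_mul, ← mul_assoc (2 : ℂ), ← mul_assoc (2 : ℂ)] at hle
  have hexp : Real.exp (-(2 * π * (max y.re 0 * (y.im + (b⁻¹ - b) / 2)))) =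
      Real.exp (2 * (π * b) * max y.re 0) *
        Real.exp (-(2 * π * (max y.re 0 * (y.im + (b + b⁻¹) / 2)))) := by
    rw [← Real.exp_add]
    congr 1
    ring
  rw [div_mul_eq_mul_div, le_div_iff₀' hc]
  refine le_of_mul_le_mul_left ?_ (Real.exp_pos (2 * (π * b) * max y.re 0))
  calc Real.exp (2 * (π * b) * max y.re 0) * (c * ‖f (y + cb b)‖)
      = c * Real.exp (2 * (π * b) * max y.re 0) * ‖f (y + cb b)‖ := by ring
    _ ≤ ‖1 - Complex.exp (2 * π * b * y)‖ * ‖f (y + cb b)‖ := by gcongr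
    _ ≤ _ := hnum.trans_eq (by rw [hexp, mul_left_comm])

/-- The exponent of the bound is linear in `y.re` on each of the two half-lines. -/
lemma exists_norm_fourierKernel_le (hf : IsDilogContinuation b f) (hb1 : b ≤ 1) {r β : ℝ}
    (hr : 0 < r) (hβ : β < b) : ∃ C > 0, ∀ (x y : ℂ) (α : ℝ), r ≤ ‖y‖ → |y.im| ≤ β →
      α ≤ (b + b⁻¹) / 2 - x.im → α ≤ y.im + x.im →
      ‖fourierKernel b f x y‖ ≤ C * Real.exp (2 * π * (x.re * y.im - α * |y.re|)) := by
  obtain ⟨C, hC, hle⟩ := hf.exists_norm_apply_add_cb_le hb1 hr hβ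
  refine ⟨C, hC, fun x y α hy hyβ hα₁ hα₂ => ?_⟩
  rw [fourierKernel, norm_mul, norm_exp_mul_norm_exp]
  grw [hle y hy hyβ]
  rw [mul_left_comm, ← Real.exp_add]
  gcongr
  rw [neg_eq_neg_one_mul, mul_left_comm, ← mul_add]
  gcongr
  rcases le_total 0 y.re with h | h
  · rw [max_eq_left h, abs_of_nonneg h]
    nlinarith
  · rw [max_eq_right h, abs_of_nonpos h]
    nlinarith

lemma fourierKernel_sub_I_mul (hf : IsDilogContinuation b f) (hb1 : b ≤ 1) (x : ℂ) {y : ℂ}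
    (hy0 : y ≠ 0) (hy : y.im < b) :
    fourierKernel b f (x - I * b) y = fourierKernel b f x y +
      Complex.exp (2 * π * b * (x - I * b / 2)) * fourierKernel b f x (y - I * b) := by
  have hcb : y - I * b + cb b = y + I * ((b⁻¹ - b) / 2 : ℝ) := by
    rw [cb]
    push_cast
    ring
  have hexp₁ : Complex.exp (2 * π * b * (x - I * b / 2)) *
      (Complex.exp (-2 * π * I * x * (y - I * b)) * Complex.exp (-π * I * (y - I * b) ^ 2)) =
      Complex.exp (-2 * π * I * (x - I * b) * y) * Complex.exp (-π * I * y ^ 2) := by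
    simp only [← Complex.exp_add]
    congr 1
    linear_combination (2 * π * b * x - π * I * b ^ 2) * I_sq
  have hexp₂ : Complex.exp (-2 * π * I * (x - I * b) * y) * Complex.exp (2 * π * b * y) =
      Complex.exp (-2 * π * I * x * y) := by
    rw [← Complex.exp_add]
    congr 1
    linear_combination (2 * π * b * y) * I_sq
  rw [fourierKernel, fourierKernel, fourierKernel, hcb, ← mul_assoc, hexp₁,
    ← hf.one_sub_exp_mul_apply_add_cb hb1 hy0 hy, ← hexp₂]
  ring

end IsDilogContinuation

end FourierKernel

section PeriodicStrip

lemma eq_average_of_fourier_integral_eq_zero {T s : ℝ} (hT : 0 < T) {φ : ℝ → ℂ}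
    (hφ : ContinuousOn φ (Set.Icc s (s + T))) (hper : φ s = φ (s + T))
    (hzero : ∀ n : ℤ, n ≠ 0 → ∫ v in s..s + T, Complex.exp (-(2 * π * I * n * v / T)) * φ v = 0)
    {v : ℝ} (hv : v ∈ Set.Ico s (s + T)) : φ v = (1 / T : ℝ) • ∫ u in s..s + T, φ u := by
  have : Fact (0 < T) := ⟨hT⟩
  let F : C(AddCircle T, ℂ) :=
    ⟨AddCircle.liftIco T s φ, AddCircle.liftIco_continuous hper hφ⟩
  have hcoeff (n : ℤ) : fourierCoeff F n =
      (1 / T) • ∫ u in s..s + T, Complex.exp (-(2 * π * I * n * u / T)) * φ u := by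
    refine (fourierCoeff_liftIco_eq φ n).trans ?_
    rw [fourierCoeffOn_eq_integral, add_sub_cancel_left]
    simp only [fourier_coe_apply, smul_eq_mul]
    push_cast
    simp only [mul_neg, neg_mul, neg_div]
  have hsupp : ∀ n ≠ 0, fourierCoeff F n = 0 := fun n hn => by
    rw [hcoeff, hzero n hn, smul_zero]
  have hsum := has_pointwise_sum_fourier_series_of_summable
    (summable_of_ne_finset_zero (s := {0}) fun n hn => hsupp n (by simpa using hn))
    (v : AddCircle T)
  have hval := hsum.unique (hasSum_single 0 fun n hn => by rw [hsupp n hn, zero_smul])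
  rw [fourier_zero, smul_eq_mul, mul_one, hcoeff] at hval
  simpa [F, AddCircle.liftIco_coe_apply hv] using hval

variable {P : ℂ → ℂ} {s T : ℝ}

lemma integral_vertical_eq_of_periodic (hT : 0 < T)
    (hP : DifferentiableOn ℂ P {z | z.im ∈ Set.Icc s (s + T)})
    (hper : ∀ t : ℝ, P (t + (s + T : ℝ) * I) = P (t + s * I)) (t t' : ℝ) :
    ∫ v in s..s + T, P (t + v * I) = ∫ v in s..s + T, P (t' + v * I) := by
  have hrect := Complex.integral_boundary_rect_eq_zero_of_differentiableOn P (t + s * I)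
    (t' + (s + T : ℝ) * I) (hP.mono fun z hz => by
      have hz' : z.im ∈ Set.uIcc s (s + T) := by simpa using hz.2
      rwa [Set.uIcc_of_le (by linarith)] at hz')
  simp only [add_re, add_im, ofReal_re, ofReal_im, re_ofReal_mul, im_ofReal_mul, I_re, I_im,
    mul_zero, mul_one, add_zero, zero_add, hper, sub_self, ← smul_sub] at hrect
  exact (sub_eq_zero.mp ((smul_eq_zero_iff_right I_ne_zero).mp hrect)).symm

lemma norm_exp_neg_mul_mul_le {C μ : ℝ} (hT : 0 < T) {n : ℤ} (hn : n ≠ 0) {z p : ℂ}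
    (hz : 0 ≤ n * z.re) (hp : ‖p‖ ≤ C * Real.exp (2 * π * (μ * |z.re|))) :
    ‖Complex.exp (-((2 * π * n / T : ℝ) * z)) * p‖ ≤
      C * Real.exp (-(2 * π * (1 / T - μ) * |z.re|)) := by
  have hC : 0 ≤ C := nonneg_of_mul_nonneg_left ((norm_nonneg p).trans hp) (Real.exp_pos _)
  have hn1 : (1 : ℝ) ≤ |(n : ℝ)| := by exact_mod_cast Int.one_le_abs hn
  have hre : |z.re| ≤ n * z.re := by
    rw [← abs_of_nonneg hz, abs_mul]
    exact le_mul_of_one_le_left (abs_nonneg _) hn1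
  rw [norm_mul, Complex.norm_exp, ← neg_mul, ← ofReal_neg, re_ofReal_mul]
  grw [hp]
  rw [mul_left_comm, ← Real.exp_add]
  gcongr
  calc -(2 * π * n / T) * z.re + 2 * π * (μ * |z.re|)
      = 2 * π * (μ * |z.re|) - 2 * π / T * (n * z.re) := by ring
    _ ≤ 2 * π * (μ * |z.re|) - 2 * π / T * |z.re| := by gcongr
    _ = -(2 * π * (1 / T - μ) * |z.re|) := by ring

lemma fourier_integral_vertical_eq_zero {C μ : ℝ} (hT : 0 < T) (hμ : μ * T < 1)
    (hP : DifferentiableOn ℂ P {z | z.im ∈ Set.Icc s (s + T)})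
    (hper : ∀ t : ℝ, P (t + (s + T : ℝ) * I) = P (t + s * I))
    (hbound : ∀ z : ℂ, z.im ∈ Set.Icc s (s + T) → ‖P z‖ ≤ C * Real.exp (2 * π * (μ * |z.re|)))
    {n : ℤ} (hn : n ≠ 0) (t : ℝ) :
    ∫ v in s..s + T, Complex.exp (-((2 * π * n / T : ℝ) * (t + v * I))) * P (t + v * I) = 0 := by
  have hT0 : (T : ℂ) ≠ 0 := ofReal_ne_zero.mpr hT.ne'
  set g : ℂ → ℂ := fun z => Complex.exp (-((2 * π * n / T : ℝ) * z)) * P z with hg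
  have hconst := integral_vertical_eq_of_periodic (P := g) hT
    (DifferentiableOn.mul (by fun_prop) hP) fun u => by
      simp only [hg, hper]
      congr 1
      rw [Complex.exp_eq_exp_iff_exists_int]
      refine ⟨-n, ?_⟩
      push_cast
      field_simp
      ring
  have hle (τ : ℝ) (hτ : 0 ≤ n * τ) : ‖∫ v in s..s + T, g (t + v * I)‖ ≤
      C * Real.exp (-(2 * π * (1 / T - μ) * |τ|)) * |s + T - s| := by
    rw [hconst t τ]
    refine intervalIntegral.norm_integral_le_of_norm_le_const fun v hv => ?_
    rw [Set.uIoc_of_le (by linarith)] at hv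
    simpa [hg] using norm_exp_neg_mul_mul_le hT hn (z := τ + v * I) (by simpa)
      (hbound _ (by simpa using ⟨hv.1.le, hv.2⟩))
  have hrate : 0 < 2 * π * (1 / T - μ) :=
    mul_pos two_pi_pos (sub_pos.mpr ((lt_div_iff₀ hT).mpr hμ))
  have hlim := ((tendsto_exp_neg_mul_abs_cocompact hrate).const_mul C).mul_const |s + T - s|
  rw [mul_zero, zero_mul] at hlim
  refine norm_le_zero_iff.mp ?_
  rcases hn.lt_or_gt with hneg | hpos
  · exact ge_of_tendsto (hlim.mono_left atBot_le_cocompact) <| (eventually_le_atBot 0).mono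
      fun τ hτ => hle τ (mul_nonneg_of_nonpos_of_nonpos (by exact_mod_cast hneg.le) hτ)
  · exact ge_of_tendsto (hlim.mono_left atTop_le_cocompact) <| (eventually_ge_atTop 0).mono
      fun τ hτ => hle τ (mul_nonneg (by exact_mod_cast hpos.le) hτ)

/-- A nonconstant entire `iT`-periodic function grows at least like `e^{2π|Re z|/T}`. -/
theorem exists_forall_eq_of_periodic_strip {C μ : ℝ} (hT : 0 < T) (hμ : μ * T < 1)
    (hP : DifferentiableOn ℂ P {z | z.im ∈ Set.Icc s (s + T)})
    (hper : ∀ t : ℝ, P (t + (s + T : ℝ) * I) = P (t + s * I))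
    (hbound : ∀ z : ℂ, z.im ∈ Set.Icc s (s + T) → ‖P z‖ ≤ C * Real.exp (2 * π * (μ * |z.re|))) :
    ∃ c, ∀ z : ℂ, z.im ∈ Set.Ico s (s + T) → P z = c := by
  refine ⟨(1 / T) • ∫ v in s..s + T, P ((0 : ℝ) + v * I), fun z hz => ?_⟩
  rw [integral_vertical_eq_of_periodic hT hP hper 0 z.re]
  nth_rw 1 [← re_add_im z]
  refine eq_average_of_fourier_integral_eq_zero (φ := fun v => P (z.re + v * I)) hT ?_
    (hper z.re).symm (fun n hn => ?_) hz
  · exact hP.continuousOn.comp (by fun_prop) fun v hv => by simpa using hv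
  · have hzero := fourier_integral_vertical_eq_zero hT hμ hP hper hbound hn z.re
    have hsplit (v : ℝ) : Complex.exp (-((2 * π * n / T : ℝ) * (z.re + v * I))) * P (z.re + v * I) =
        Complex.exp (-((2 * π * n / T : ℝ) * z.re)) *
          (Complex.exp (-(2 * π * I * n * v / T)) * P (z.re + v * I)) := by
      rw [← mul_assoc, ← Complex.exp_add]
      congr 2
      push_cast
      ring
    simp only [hsplit, intervalIntegral.integral_const_mul] at hzero
    exact (mul_eq_zero_iff_left (Complex.exp_ne_zero _)).mp hzero

end PeriodicStrip

section HolomorphicIntegral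

variable {α : Type*} [MeasurableSpace α] {ν : Measure α}

lemma differentiableAt_integral_of_norm_le {F : ℂ → α → ℂ} {bound : α → ℝ} {x₀ : ℂ} {r : ℝ}
    (hr : 0 < r) (hF : ∀ a, DifferentiableOn ℂ (fun x => F x a) (Metric.ball x₀ r))
    (hmeas : ∀ x ∈ Metric.ball x₀ r, AEStronglyMeasurable (F x) ν)
    (hbound : ∀ x ∈ Metric.ball x₀ r, ∀ a, ‖F x a‖ ≤ bound a) (hint : Integrable bound ν) :
    DifferentiableAt ℂ (fun x => ∫ a, F x a ∂ν) x₀ := by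
  have hx₀ := Metric.mem_ball_self (x := x₀) hr
  have hderiv (a : α) {x : ℂ} (hx : x ∈ Metric.ball x₀ r) :
      HasDerivAt (fun x => F x a) (deriv (fun x => F x a) x) x :=
    ((hF a).differentiableAt (Metric.isOpen_ball.mem_nhds hx)).hasDerivAt
  have hmeas' : AEStronglyMeasurable (fun a => deriv (fun x => F x a) x₀) ν := by
    have hball : ∀ᶠ x in 𝓝[≠] x₀, x ∈ Metric.ball x₀ r :=
      mem_nhdsWithin_of_mem_nhds (Metric.ball_mem_nhds x₀ hr)
    obtain ⟨u, hu, hur⟩ := exists_seq_forall_of_frequently hball.frequently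
    refine aestronglyMeasurable_of_tendsto_ae atTop
      (f := fun n a => slope (fun x => F x a) x₀ (u n)) (fun n => ?_)
      (.of_forall fun a => (hderiv a hx₀).tendsto_slope.comp hu)
    simp only [slope_def_module]
    exact ((hmeas _ (hur n)).sub (hmeas _ hx₀)).const_smul (u n - x₀)⁻¹
  have hcauchy : ∀ a, ∀ x ∈ Metric.ball x₀ (r / 2),
      ‖deriv (fun x => F x a) x‖ ≤ bound a / (r / 4) := fun a x hx => by
    have hsub : Metric.closedBall x (r / 4) ⊆ Metric.ball x₀ r :=
      Metric.closedBall_subset_ball' (by linarith [Metric.mem_ball.mp hx])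
    exact Complex.norm_deriv_le_of_forall_mem_sphere_norm_le (by positivity)
      (((hF a).mono hsub).diffContOnCl_ball subset_rfl) fun z hz =>
        hbound z (hsub (Metric.sphere_subset_closedBall hz)) a
  exact (hasDerivAt_integral_of_dominated_loc_of_deriv_le (Metric.ball_mem_nhds x₀ (half_pos hr))
    (by filter_upwards [Metric.ball_mem_nhds x₀ hr] using hmeas)
    (hint.mono' (hmeas x₀ hx₀) (.of_forall (hbound x₀ hx₀))) hmeas' (.of_forall hcauchy)
    (hint.div_const _) (.of_forall fun a x hx =>
      hderiv a (Metric.ball_subset_ball (by linarith) hx))).2.differentiableAt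

end HolomorphicIntegral

section FourierTransform

variable {b : ℝ} {f : ℂ → ℂ}

namespace IsDilogContinuation

lemma continuous_fourierKernel_line (hf : IsDilogContinuation b f) (hb1 : b ≤ 1) (x : ℂ) {y₀ : ℝ}
    (hy₀ : y₀ ≠ 0) (hy₀b : y₀ < b) : Continuous fun t : ℝ => fourierKernel b f x (t + y₀ * I) :=
  (hf.hasResidueOn_fourierKernel hb1 x).continuous_horizontal hy₀ fun _ hy => hy.trans_lt hy₀b

lemma exists_norm_fourierKernel_line_le (hf : IsDilogContinuation b f) (hb1 : b ≤ 1) {y₀ : ℝ}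
    (hy₀ : y₀ ≠ 0) (hy₀b : |y₀| < b) : ∃ C > 0, ∀ (x : ℂ) (α : ℝ), α ≤ (b + b⁻¹) / 2 - x.im →
      α ≤ y₀ + x.im → ∀ t : ℝ, ‖fourierKernel b f x (t + y₀ * I)‖ ≤
        C * Real.exp (2 * π * (y₀ * x.re)) * Real.exp (-(2 * π * α * |t|)) := by
  obtain ⟨C, hC, hle⟩ := hf.exists_norm_fourierKernel_le hb1 (abs_pos.mpr hy₀) hy₀b
  refine ⟨C, hC, fun x α hα₁ hα₂ t => ?_⟩
  refine (hle x (t + y₀ * I) α (by simpa using Complex.abs_im_le_norm (t + y₀ * I)) (by simp) hα₁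
    (by simpa)).trans_eq ?_
  rw [mul_assoc C, ← Real.exp_add]
  congr 2
  simp
  ring

lemma integrable_fourierKernel_line (hf : IsDilogContinuation b f) (hb1 : b ≤ 1) {x : ℂ} {y₀ : ℝ}
    (hy₀ : y₀ ≠ 0) (hy₀b : |y₀| < b) (hx : -y₀ < x.im) (hx' : x.im < (b + b⁻¹) / 2) :
    Integrable fun t : ℝ => fourierKernel b f x (t + y₀ * I) := by
  obtain ⟨C, -, hle⟩ := hf.exists_norm_fourierKernel_line_le hb1 hy₀ hy₀b
  have hα : 0 < min ((b + b⁻¹) / 2 - x.im) (y₀ + x.im) :=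
    lt_min (by linarith) (by linarith)
  exact integrable_of_norm_le_exp_neg_mul_abs (mul_pos two_pi_pos hα)
    (hf.continuous_fourierKernel_line hb1 x hy₀ (le_abs_self y₀ |>.trans_lt hy₀b))
    (hle x _ (min_le_left _ _) (min_le_right _ _))

lemma exists_norm_integral_fourierKernel_le (hf : IsDilogContinuation b f) (hb1 : b ≤ 1)
    {y₀ α : ℝ} (hy₀ : y₀ ≠ 0) (hy₀b : |y₀| < b) (hα : 0 < α) : ∃ C > 0, ∀ x : ℂ,
      α ≤ (b + b⁻¹) / 2 - x.im → α ≤ y₀ + x.im →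
      ‖∫ t : ℝ, fourierKernel b f x (t + y₀ * I)‖ ≤ C * Real.exp (2 * π * (y₀ * x.re)) := by
  obtain ⟨C, hC, hle⟩ := hf.exists_norm_fourierKernel_line_le hb1 hy₀ hy₀b
  have hint := integrable_exp_neg_mul_abs (mul_pos two_pi_pos hα)
  refine ⟨C * ∫ t : ℝ, Real.exp (-(2 * π * α * |t|)), by
    have := integral_exp_pos hint; positivity, fun x hx₁ hx₂ => ?_⟩
  refine (norm_integral_le_of_norm_le (hint.const_mul _)
    (.of_forall (hle x α hx₁ hx₂))).trans_eq ?_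
  rw [integral_const_mul]
  ring

lemma differentiableAt_integral_fourierKernel (hf : IsDilogContinuation b f) (hb1 : b ≤ 1)
    {x : ℂ} {y₀ : ℝ} (hy₀ : y₀ ≠ 0) (hy₀b : |y₀| < b) (hx : -y₀ < x.im)
    (hx' : x.im < (b + b⁻¹) / 2) :
    DifferentiableAt ℂ (fun x => ∫ t : ℝ, fourierKernel b f x (t + y₀ * I)) x := by
  obtain ⟨C, hC, hle⟩ := hf.exists_norm_fourierKernel_line_le hb1 hy₀ hy₀b
  set r := min ((b + b⁻¹) / 2 - x.im) (y₀ + x.im) / 2 with hr_def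
  have hr : 0 < r := half_pos (lt_min (by linarith) (by linarith))
  have hr₁ : 2 * r ≤ (b + b⁻¹) / 2 - x.im := by
    rw [hr_def, mul_div_cancel₀ _ two_ne_zero]; exact min_le_left _ _
  have hr₂ : 2 * r ≤ y₀ + x.im := by
    rw [hr_def, mul_div_cancel₀ _ two_ne_zero]; exact min_le_right _ _
  refine differentiableAt_integral_of_norm_le
    (bound := fun t => C * Real.exp (2 * π * (|y₀| * (|x.re| + r))) *
      Real.exp (-(2 * π * r * |t|))) hr (fun t => ?_) (fun z _ => ?_) (fun z hz t => ?_)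
      ((integrable_exp_neg_mul_abs (mul_pos two_pi_pos hr)).const_mul _)
  · unfold fourierKernel
    fun_prop
  · exact (hf.continuous_fourierKernel_line hb1 z hy₀
      (le_abs_self y₀ |>.trans_lt hy₀b)).aestronglyMeasurable
  · have hzr : ‖z - x‖ < r := mem_ball_iff_norm.mp hz
    have him := abs_le.mp ((Complex.abs_im_le_norm (z - x)).trans hzr.le)
    have hre := (Complex.abs_re_le_norm (z - x)).trans hzr.le
    rw [Complex.sub_im] at him
    rw [Complex.sub_re] at hre
    have hle' : y₀ * z.re ≤ |y₀| * (|x.re| + r) :=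
      calc y₀ * z.re ≤ |y₀| * |z.re| := by rw [← abs_mul]; exact le_abs_self _
        _ ≤ |y₀| * (|x.re| + r) := by
          gcongr
          linarith [abs_sub_abs_le_abs_sub z.re x.re]
    grw [hle z r (by linarith) (by linarith) t, hle']

end IsDilogContinuation

/-- The Fourier transform `∫ e^{-2πixy} e^{-πiy²} f(y + c_b) dy` along a contour passing below the
pole at `0`, written as the integral along the line `Im y = b / 4` above the pole plus the residue
term `2πi Res = ζ₀⁻¹`. -/
def fourierDilog (b : ℝ) (f : ℂ → ℂ) (x : ℂ) : ℂ :=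
  (zeta0 b)⁻¹ + ∫ t : ℝ, fourierKernel b f x (t + (b / 4 : ℝ) * I)

namespace IsDilogContinuation

lemma fourierDilog_eq_integral (hf : IsDilogContinuation b f) (hb1 : b ≤ 1) {x : ℂ} {y₀ : ℝ}
    (hy₀ : y₀ < 0) (hy₀b : -b < y₀) (hx : -y₀ < x.im) (hx' : x.im < (b + b⁻¹) / 2) :
    fourierDilog b f x = ∫ t : ℝ, fourierKernel b f x (t + y₀ * I) := by
  have hb := hf.pos
  have hc₁ : -y₀ ≤ max (-y₀) (b / 4) := le_max_left _ _
  have hc₂ : b / 4 ≤ max (-y₀) (b / 4) := le_max_right _ _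
  obtain ⟨C, hC, hle⟩ := hf.exists_norm_fourierKernel_le hb1
    (lt_min (neg_pos.mpr hy₀) (by positivity : 0 < b / 4))
    (max_lt (by linarith) (by linarith) : max (-y₀) (b / 4) < b)
  set α := min ((b + b⁻¹) / 2 - x.im) (y₀ + x.im)
  have hα : 0 < α := lt_min (by linarith) (by linarith)
  have key := (hf.hasResidueOn_fourierKernel hb1 x).integral_sub_integral hy₀
    (by positivity : 0 < b / 4) (C := C * Real.exp (2 * π * (|x.re| * max (-y₀) (b / 4))))
    (fun y _ hy => hy.trans_lt (by linarith)) (mul_pos two_pi_pos hα) fun y hy hy' hyr => by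
      have him : |y.im| ≤ max (-y₀) (b / 4) := abs_le.mpr ⟨by linarith, by linarith⟩
      have hre : x.re * y.im ≤ |x.re| * max (-y₀) (b / 4) :=
        (le_abs_self _).trans (by rw [abs_mul]; gcongr)
      grw [hle x y α hyr him (min_le_left _ _) ((min_le_right _ _).trans (by gcongr)), hre]
      rw [mul_assoc C, ← Real.exp_add, mul_sub, sub_eq_add_neg, mul_assoc (2 * π)]
  rw [mul_div_cancel₀ _ two_pi_I_ne_zero, sub_eq_iff_eq_add] at key
  exact key.symm

lemma differentiableAt_fourierDilog (hf : IsDilogContinuation b f) (hb1 : b ≤ 1) {x : ℂ}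
    (hx : -(b / 4) < x.im) (hx' : x.im < (b + b⁻¹) / 2) :
    DifferentiableAt ℂ (fourierDilog b f) x := by
  have hb := hf.pos
  exact (hf.differentiableAt_integral_fourierKernel hb1 (by positivity)
    (by rw [abs_of_pos (by positivity)]; linarith) hx hx').const_add _

lemma fourierDilog_sub_I_mul (hf : IsDilogContinuation b f) (hb1 : b ≤ 1) {x : ℂ}
    (hx : 3 * b / 4 < x.im) (hx' : x.im < (b + b⁻¹) / 2) :
    fourierDilog b f (x - I * b) =
      (1 + Complex.exp (2 * π * b * (x - I * b / 2))) * fourierDilog b f x := by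
  have hb := hf.pos
  have hline (t : ℝ) : (t + (b / 4 : ℝ) * I - I * b : ℂ) = t + (-(3 * b / 4) : ℝ) * I := by
    push_cast
    ring
  have hne (t : ℝ) : (t + (b / 4 : ℝ) * I : ℂ) ≠ 0 := fun h =>
    (by positivity : b / 4 ≠ 0) (by simpa using congrArg Complex.im h)
  have hupper := hf.integrable_fourierKernel_line hb1 (x := x) (y₀ := b / 4) (by positivity)
    (by rw [abs_of_pos] <;> linarith) (by linarith) hx'
  have hlower := hf.integrable_fourierKernel_line hb1 (x := x) (y₀ := -(3 * b / 4))
    (by simpa using hb.ne') (by rw [abs_neg, abs_of_pos] <;> linarith) (by linarith) hx'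
  rw [one_add_mul]
  nth_rw 2 [hf.fourierDilog_eq_integral hb1 (y₀ := -(3 * b / 4)) (by linarith) (by linarith)
    (by linarith) hx']
  rw [fourierDilog, fourierDilog, add_assoc, ← integral_const_mul,
    ← integral_add hupper (hlower.const_mul _)]
  congr 2 with t
  rw [hf.fourierKernel_sub_I_mul hb1 x (hne t) (by simp; linarith), hline]

lemma tendsto_fourierDilog_atBot (hf : IsDilogContinuation b f) (hb1 : b ≤ 1) :
    Tendsto (fun ξ : ℝ => fourierDilog b f ξ) atBot (𝓝 (zeta0 b)⁻¹) := by
  have hb := hf.pos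
  have hbinv := inv_pos.mpr hb
  obtain ⟨C, -, hle⟩ := hf.exists_norm_integral_fourierKernel_le hb1 (y₀ := b / 4) (α := b / 4)
    (by positivity) (by rw [abs_of_pos] <;> linarith) (by positivity)
  have hexp : Tendsto (fun ξ : ℝ => C * Real.exp (2 * π * (b / 4 * ξ))) atBot (𝓝 0) := by
    have hlin : Tendsto (fun ξ : ℝ => 2 * π * (b / 4 * ξ)) atBot atBot :=
      (tendsto_id.const_mul_atBot (by positivity)).const_mul_atBot two_pi_pos
    simpa using (Real.tendsto_exp_atBot.comp hlin).const_mul C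
  simpa [fourierDilog] using (squeeze_zero_norm (fun ξ : ℝ =>
    by simpa using hle ξ (by simp; linarith) (by simp)) hexp).const_add (zeta0 b)⁻¹

end IsDilogContinuation

end FourierTransform

section Identification

variable {b : ℝ} {f : ℂ → ℂ}

namespace IsDilogContinuation

lemma apply_ne_zero (hf : IsDilogContinuation b f) {z : ℂ} (hz : |z.im| < (b + b⁻¹) / 2) :
    f z ≠ 0 := by
  rw [hf.eq_eb z hz]
  exact Complex.exp_ne_zero _

lemma exists_norm_fourierDilog_le (hf : IsDilogContinuation b f) (hb1 : b ≤ 1) :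
    ∃ C, ∀ x : ℂ, x.im ∈ Set.Icc (-(b / 8)) (-(b / 8) + b) →
      ‖fourierDilog b f x‖ * Real.exp (2 * π * (max x.re 0 * x.im)) ≤
        C * Real.exp (2 * π * (3 * b / 4 * |x.re|)) := by
  have hb := hf.pos
  have hbb : b ≤ b⁻¹ := hb1.trans ((one_le_inv₀ hb).mpr hb1)
  obtain ⟨C₁, hC₁, hupper⟩ := hf.exists_norm_integral_fourierKernel_le hb1 (y₀ := b / 4)
    (α := b / 8) (by positivity) (by rw [abs_of_pos] <;> linarith) (by positivity)
  obtain ⟨C₂, hC₂, hlower⟩ := hf.exists_norm_integral_fourierKernel_le hb1 (y₀ := -(b / 4))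
    (α := b / 8) (by simpa using hb.ne') (by rw [abs_neg, abs_of_pos] <;> linarith) (by positivity)
  refine ⟨‖(zeta0 b)⁻¹‖ + C₁ + C₂, fun x ⟨hx, hx'⟩ => ?_⟩
  have hre := le_abs_self x.re
  have hre' := neg_abs_le x.re
  have hmax : max x.re 0 ≤ |x.re| := max_le hre (abs_nonneg _)
  have hmax0 : 0 ≤ max x.re 0 := le_max_right _ _
  rcases le_total x.im (b / 2) with h | h
  · have hΦ : ‖fourierDilog b f x‖ ≤
        (‖(zeta0 b)⁻¹‖ + C₁ + C₂) * Real.exp (2 * π * (b / 4 * |x.re|)) := by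
      have hone : 1 ≤ Real.exp (2 * π * (b / 4 * |x.re|)) := Real.one_le_exp (by positivity)
      rw [fourierDilog]
      grw [norm_add_le, hupper x (by linarith) (by linarith), hre]
      nlinarith [norm_nonneg (zeta0 b)⁻¹]
    grw [hΦ, mul_assoc, ← Real.exp_add, ← mul_add]
    gcongr
    nlinarith
  · rw [hf.fourierDilog_eq_integral hb1 (y₀ := -(b / 4)) (by linarith) (by linarith)
      (by linarith) (by linarith)]
    grw [hlower x (by linarith) (by linarith), mul_assoc, ← Real.exp_add, ← mul_add]
    gcongr
    · exact le_add_of_nonneg_left (by positivity)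
    · rcases le_total 0 x.re with h0 | h0
      · rw [max_eq_left h0, abs_of_nonneg h0]
        nlinarith
      · rw [max_eq_right h0, abs_of_nonpos h0]
        nlinarith

lemma fourierDilog_div_sub_I_mul (hf : IsDilogContinuation b f) (hb1 : b ≤ 1) {x : ℂ}
    (hx : 3 * b / 4 < x.im) (hx' : x.im < (b + b⁻¹) / 2) :
    fourierDilog b f (x - I * b) / f (x - I * b) = fourierDilog b f x / f x := by
  have hb := hf.pos
  have _ := inv_pos.mpr hb
  have hshift := hf.sub_I_mul_of_im_lt hx'
  have hne : f (x - I * b) ≠ 0 := hf.apply_ne_zero (by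
    simp only [sub_im, I_mul_im, ofReal_re]
    rw [abs_lt]
    constructor <;> linarith)
  rw [hshift] at hne ⊢
  rw [hf.fourierDilog_sub_I_mul hb1 hx hx', mul_div_mul_left _ _ (left_ne_zero_of_mul hne)]

lemma exists_fourierDilog_div_eq (hf : IsDilogContinuation b f) (hb1 : b ≤ 1) :
    ∃ c, ∀ x : ℝ, fourierDilog b f x / eb b x = c := by
  have hb := hf.pos
  have hbb : b ≤ b⁻¹ := hb1.trans ((one_le_inv₀ hb).mpr hb1)
  have hstrip {z : ℂ} (hz : z.im ∈ Set.Icc (-(b / 8)) (-(b / 8) + b)) :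
      |z.im| ≤ 7 * b / 8 := abs_le.mpr ⟨by linarith [hz.1], by linarith [hz.2]⟩
  have hlt : 7 * b / 8 < (b + b⁻¹) / 2 := by linarith
  have hd : DifferentiableOn ℂ (fun z => fourierDilog b f z / f z)
      {z | z.im ∈ Set.Icc (-(b / 8)) (-(b / 8) + b)} := fun z hz => by
    have hz' := (hstrip hz).trans_lt hlt
    have hz₂ := (abs_lt.mp hz').2
    exact ((hf.differentiableAt_fourierDilog hb1 (by linarith [hz.1]) hz₂).div
      (hf.analyticAt_of_im_lt hz₂).differentiableAt
      (hf.apply_ne_zero hz')).differentiableWithinAt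
  obtain ⟨C, hC⟩ := hf.exists_norm_fourierDilog_le hb1
  obtain ⟨D, hD, hinv⟩ := exists_norm_eb_le hb hlt
  have hper (t : ℝ) : fourierDilog b f (t + (-(b / 8) + b : ℝ) * I) /
      f (t + (-(b / 8) + b : ℝ) * I) =
        fourierDilog b f (t + (-(b / 8) : ℝ) * I) / f (t + (-(b / 8) : ℝ) * I) := by
    have hz : (t + (-(b / 8) : ℝ) * I : ℂ) = t + (-(b / 8) + b : ℝ) * I - I * b := by
      push_cast
      ring
    rw [hz, hf.fourierDilog_div_sub_I_mul hb1] <;> simp <;> linarith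
  obtain ⟨c, hc⟩ := exists_forall_eq_of_periodic_strip (C := C * D) (μ := 3 * b / 4) hb
    (by nlinarith) hd hper fun z hz => by
      have hΦ := hC z hz
      rw [norm_div, div_eq_mul_inv, ← norm_inv, hf.eq_eb z ((hstrip hz).trans_lt hlt)]
      grw [(hinv z (hstrip hz)).2]
      nlinarith
  refine ⟨c, fun x => ?_⟩
  rw [← hf.eq_eb x (by rw [ofReal_im, abs_zero]; positivity)]
  exact hc x ⟨by simp; linarith, by simp; linarith⟩

lemma fourierDilog_eq (hf : IsDilogContinuation b f) (hb1 : b ≤ 1) (x : ℝ) :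
    fourierDilog b f x = (zeta0 b)⁻¹ * eb b x := by
  have hb := hf.pos
  obtain ⟨c, hc⟩ := hf.exists_fourierDilog_div_eq hb1
  have heb : Tendsto (fun ξ : ℝ => eb b ξ) atBot (𝓝 1) := by
    simpa using tendsto_eb_atBot hb (v := 0) (by rw [abs_zero]; positivity)
  have hlim := (hf.tendsto_fourierDilog_atBot hb1).div heb one_ne_zero
  have hc' : c = (zeta0 b)⁻¹ := by
    simpa using tendsto_nhds_unique (tendsto_const_nhds.congr fun ξ => (hc ξ).symm) hlim
  rw [← hc', ← hc x, div_mul_cancel₀]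
  exact Complex.exp_ne_zero _

end IsDilogContinuation

end Identification

section IndentedContour

variable {b : ℝ} {f : ℂ → ℂ}

namespace IsDilogContinuation

lemma tendsto_integral_vertical_fourierKernel (hf : IsDilogContinuation b f) (hb1 : b ≤ 1) (x : ℝ)
    {l : Filter ℝ} [l.IsCountablyGenerated] (hl : l ≤ cocompact ℝ) :
    Tendsto (fun u : ℝ => ∫ v in (0 : ℝ)..b / 4, fourierKernel b f x (u + v * I)) l (𝓝 0) := by
  have hb := hf.pos
  have hbinv := inv_pos.mpr hb
  obtain ⟨C, hC, hle⟩ := hf.exists_norm_fourierKernel_le hb1 one_pos (by linarith : b / 4 < b)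
  have habs : Tendsto (fun u : ℝ => |u|) l atTop :=
    (tendsto_norm_cocompact_atTop (E := ℝ)).mono_left hl
  have hbound : ∀ᶠ u : ℝ in l, ∀ v ∈ Set.uIoc 0 (b / 4), ‖fourierKernel b f x (u + v * I)‖ ≤
      C * Real.exp (2 * π * (x * v - v * |u|)) := by
    filter_upwards [habs.eventually_ge_atTop 1] with u hu v hv
    rw [Set.uIoc_of_le (by positivity)] at hv
    have hnorm : 1 ≤ ‖(u + v * I : ℂ)‖ := hu.trans <| by
      simpa using Complex.abs_re_le_norm (u + v * I)
    simpa using hle x (u + v * I) v hnorm (by simpa [abs_of_pos hv.1] using hv.2)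
      (by simp; linarith [hv.2]) (by simp)
  rw [← intervalIntegral.integral_zero (E := ℂ) (μ := volume) (a := 0) (b := b / 4)]
  refine intervalIntegral.tendsto_integral_filter_of_dominated_convergence
    (fun v => C * Real.exp (2 * π * (x * v))) ?_ ?_
    (Continuous.intervalIntegrable (μ := volume) (by fun_prop) _ _) (.of_forall fun v hv => ?_)
  · filter_upwards [habs.eventually_gt_atTop 0] with u hu
    refine ((hf.hasResidueOn_fourierKernel hb1 x).continuousOn.comp (by fun_prop) fun v hv =>
      ⟨?_, fun h0 => ?_⟩).aestronglyMeasurable measurableSet_uIoc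
    · rw [Set.uIoc_of_le (by positivity)] at hv
      simpa using hv.2.trans_lt (by linarith)
    · exact abs_pos.mp hu (by simpa using congrArg Complex.re h0)
  · filter_upwards [hbound] with u hu
    refine .of_forall fun v hv => (hu v hv).trans ?_
    rw [Set.uIoc_of_le (by positivity)] at hv
    gcongr
    exact sub_le_self _ (mul_nonneg hv.1.le (abs_nonneg _))
  · have hlin : Tendsto (fun u : ℝ => 2 * π * (x * v - v * |u|)) l atBot := by
      rw [Set.uIoc_of_le (by positivity)] at hv
      exact (tendsto_atBot_add_const_left _ _ <| tendsto_neg_atTop_atBot.comp <|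
        habs.const_mul_atTop hv.1).const_mul_atBot two_pi_pos
    have hlim := (Real.tendsto_exp_atBot.comp hlin).const_mul C
    rw [mul_zero] at hlim
    exact squeeze_zero_norm' (hbound.mono fun u hu => hu v hv) hlim

theorem tendsto_indentedIntegral_fourierKernel (hf : IsDilogContinuation b f) (hb1 : b ≤ 1)
    (x : ℝ) {δ : ℝ} (hδ : 0 < δ) :
    Tendsto (fun R : ℝ × ℝ => indentedIntegral (fourierKernel b f x) δ (-R.1) R.2)
      (atTop ×ˢ atTop) (𝓝 (fourierDilog b f x)) := by
  have hb := hf.pos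
  have hfst := tendsto_neg_atTop_atBot.comp
    (tendsto_fst (f := atTop (α := ℝ)) (g := atTop (α := ℝ)))
  have hsnd := tendsto_snd (f := atTop (α := ℝ)) (g := atTop (α := ℝ))
  have hline := intervalIntegral_tendsto_integral
    (hf.integrable_fourierKernel_line hb1 (x := x) (y₀ := b / 4) (by positivity)
      (by rw [abs_of_pos] <;> linarith) (by simpa) (by rw [ofReal_im]; positivity)) hfst hsnd
  have hright := ((hf.tendsto_integral_vertical_fourierKernel hb1 x atTop_le_cocompact).comp
    hsnd).const_mul I
  have hleft := ((hf.tendsto_integral_vertical_fourierKernel hb1 x atBot_le_cocompact).comp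
    hfst).const_mul I
  have hlim := ((hline.const_add (zeta0 b)⁻¹).sub hright).add hleft
  rw [mul_zero, sub_zero, add_zero] at hlim
  refine hlim.congr' ?_
  filter_upwards [(eventually_gt_atTop 0).prod_mk (eventually_gt_atTop 0)] with R hR
  have key := (hf.hasResidueOn_fourierKernel hb1 x).indentedIntegral_sub_integral hδ
    (neg_neg_of_pos hR.1) hR.2 (by positivity : 0 < b / 4) fun y hy => hy.trans_lt (by linarith)
  rw [mul_div_cancel₀ _ two_pi_I_ne_zero] at key
  simp only [Function.comp_apply]
  linear_combination -key

end IsDilogContinuation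

theorem statement7_general (hf : IsDilogContinuation b f) (x : ℝ) {δ : ℝ} (hδ : 0 < δ) :
    Tendsto (fun R : ℝ × ℝ => indentedIntegral (fourierKernel b f x) δ (-R.1) R.2)
      (atTop ×ˢ atTop) (𝓝 ((zeta0 b)⁻¹ * eb b x)) := by
  rcases le_total b 1 with hb1 | hb1
  · rw [← hf.fourierDilog_eq hb1]
    exact hf.tendsto_indentedIntegral_fourierKernel hb1 x hδ
  · have hb1' : b⁻¹ ≤ 1 := inv_le_one_of_one_le₀ hb1
    rw [← zeta0_inv, ← eb_inv, ← fourierKernel_inv, ← hf.inv.fourierDilog_eq hb1']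
    exact hf.inv.tendsto_indentedIntegral_fourierKernel hb1' x hδ

end IndentedContour

/-- the Fourier-type integral representation
`∫_{γ_δ} e^{−2πixy}·e^{−πiy²}·e_b(y+c_b) dy = ζ₀⁻¹·e_b(x)` where `γ_δ` is the real axis
with the segment `[−δ,δ]` replaced by the semicircle of radius `δ` below the origin,
and `e_b` under the integral denotes the meromorphic continuation `f` of `e_b`
(characterized by the stated hypotheses). The improper integral is a limit over
cutoffs `R, R' → ∞`; since the limit is the same for every admissible `δ`, it is in
particular independent of `δ`. -/
theorem statement7 (b : ℝ) (hb : 0 < b) (hirr : Irrational (b ^ 2))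
    (f : ℂ → ℂ)
    (hf_ext : ∀ z : ℂ, |z.im| < (b + b⁻¹) / 2 → f z = eb b z)
    (hf_an : ∀ z : ℂ, z ∉ ebPoles b → AnalyticAt ℂ f z)
    (hf_shift₁ : ∀ z : ℂ, z - Complex.I * (b : ℂ) / 2 ∉ ebPoles b →
      z + Complex.I * (b : ℂ) / 2 ∉ ebPoles b →
      f (z - Complex.I * (b : ℂ) / 2) =
        (1 + Complex.exp (2 * (π : ℂ) * (b : ℂ) * z)) * f (z + Complex.I * (b : ℂ) / 2))
    (hf_shift₂ : ∀ z : ℂ, z - Complex.I * (b : ℂ)⁻¹ / 2 ∉ ebPoles b →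
      z + Complex.I * (b : ℂ)⁻¹ / 2 ∉ ebPoles b →
      f (z - Complex.I * (b : ℂ)⁻¹ / 2) =
        (1 + Complex.exp (2 * (π : ℂ) * (b : ℂ)⁻¹ * z)) *
          f (z + Complex.I * (b : ℂ)⁻¹ / 2))
    (x δ : ℝ) (hδ₁ : 0 < δ) (hδ₂ : δ < min b b⁻¹) :
    Tendsto
      (fun R : ℝ × ℝ =>
        (∫ t in (-R.1)..(-δ),
          Complex.exp (-2 * (π : ℂ) * Complex.I * (x : ℂ) * (t : ℂ)) *
            Complex.exp (-(π : ℂ) * Complex.I * (t : ℂ) ^ 2) * f ((t : ℂ) + cb b)) +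
        (∫ θ in (π : ℝ)..(2 * π),
          (Complex.I * (δ : ℂ) * Complex.exp (Complex.I * (θ : ℂ))) *
            (Complex.exp (-2 * (π : ℂ) * Complex.I * (x : ℂ) *
                ((δ : ℂ) * Complex.exp (Complex.I * (θ : ℂ)))) *
              Complex.exp (-(π : ℂ) * Complex.I *
                ((δ : ℂ) * Complex.exp (Complex.I * (θ : ℂ))) ^ 2) *
              f ((δ : ℂ) * Complex.exp (Complex.I * (θ : ℂ)) + cb b))) +
        (∫ t in δ..R.2,
          Complex.exp (-2 * (π : ℂ) * Complex.I * (x : ℂ) * (t : ℂ)) *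
            Complex.exp (-(π : ℂ) * Complex.I * (t : ℂ) ^ 2) * f ((t : ℂ) + cb b)))
      (atTop ×ˢ atTop) (𝓝 ((zeta0 b)⁻¹ * eb b (x : ℂ))) :=
  statement7_general ⟨hb, hf_ext, hf_an, hf_shift₁, hf_shift₂⟩ x hδ₁

end
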